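/- arXiv:1609.06355 — 2 statements merged into one kernel-verified Lean document; each statement's English description precedes it below -/
import Mathlib

section
/- For every α > 0, every integer q ≥ 2 and every β ∈ (0,1), there exist C > 0 and N0 such that for every N ≥ N0 the following holds. Set m = ⌈C·N^{1−1/⌈q/2⌉}·(log N)^C⌉ if q ≥ 3, and m = ⌈C·(log N)²⌉ if q = 2. If D is a uniformly random subset of ℤ/Nℤ of size m, then with probability at least 1 − β, every subset A ⊆ ℤ/Nℤ with |A| ≥ αN contains a q-term arithmetic progression a, a+d, a+2d, …, a+(q−1)d with nonzero common difference d ∈ D. -/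
namespace SzRD
open Finset
open scoped BigOperators

/-- real indicator -/
noncomputable def ind {Ω : Type*} (A : Set Ω) (x : Ω) : ℝ := by
  classical exact if x ∈ A then 1 else 0

lemma ind_pos {Ω : Type*} {A : Set Ω} {x : Ω} (h : x ∈ A) : ind A x = 1 := by simp [ind, h]
lemma ind_neg {Ω : Type*} {A : Set Ω} {x : Ω} (h : x ∉ A) : ind A x = 0 := by simp [ind, h]
lemma ind_nonneg {Ω : Type*} (A : Set Ω) (x : Ω) : 0 ≤ ind A x := by
  unfold ind; split_ifs <;> norm_num
lemma ind_le_one {Ω : Type*} (A : Set Ω) (x : Ω) : ind A x ≤ 1 := by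
  unfold ind; split_ifs <;> norm_num
lemma ind_congr {Ω Ω' : Type*} {A : Set Ω} {B : Set Ω'} {x : Ω} {y : Ω'} (h : x ∈ A ↔ y ∈ B) :
    ind A x = ind B y := by
  by_cases hx : x ∈ A
  · rw [ind_pos hx, ind_pos (h.1 hx)]
  · rw [ind_neg hx, ind_neg (fun hy => hx (h.2 hy))]

noncomputable def den {Ω : Type*} [Fintype Ω] (A : Set Ω) : ℝ := 𝔼 x, ind A x

lemma den_nonneg {Ω : Type*} [Fintype Ω] (A : Set Ω) : 0 ≤ den A :=
  expect_nonneg fun _ _ => ind_nonneg _ _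

lemma ex_le_one {Ω : Type*} [Fintype Ω] {f : Ω → ℝ} (h : ∀ x, f x ≤ 1) : 𝔼 x, f x ≤ 1 := by
  rcases isEmpty_or_nonempty Ω with hΩ | hΩ
  · simp [Finset.univ_eq_empty]
  · exact expect_le univ_nonempty fun x _ => h x

lemma den_le_one {Ω : Type*} [Fintype Ω] (A : Set Ω) : den A ≤ 1 :=
  ex_le_one fun x => ind_le_one A x

lemma ex_mono {Ω : Type*} [Fintype Ω] {f g : Ω → ℝ} (h : ∀ x, f x ≤ g x) :
    𝔼 x, f x ≤ 𝔼 x, g x := expect_le_expect fun x _ => h x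

lemma den_mono {Ω : Type*} [Fintype Ω] {A B : Set Ω} (h : A ⊆ B) : den A ≤ den B := by
  refine ex_mono fun x => ?_
  by_cases hx : x ∈ A
  · rw [ind_pos hx, ind_pos (h hx)]
  · rw [ind_neg hx]; exact ind_nonneg _ _

lemma ex_prod {Ω Ω' : Type*} [Fintype Ω] [Fintype Ω'] (f : Ω × Ω' → ℝ) :
    𝔼 x, f x = 𝔼 x, 𝔼 y, f (x, y) := by
  rw [← Finset.univ_product_univ, Finset.expect_product]

lemma ex_comm {Ω Ω' : Type*} [Fintype Ω] [Fintype Ω'] (f : Ω → Ω' → ℝ) :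
    𝔼 x, 𝔼 y, f x y = 𝔼 y, 𝔼 x, f x y := expect_comm _ _ _

/-- functions on a sum -/
lemma ex_sum {ι ι' κ : Type*} [Fintype ι] [Fintype ι'] [DecidableEq ι] [DecidableEq ι']
    [Fintype κ] (f : (ι ⊕ ι' → κ) → ℝ) :
    𝔼 x, f x = 𝔼 x : ι → κ, 𝔼 y : ι' → κ, f (Sum.elim x y) := by
  rw [← ex_prod (fun p : (ι → κ) × (ι' → κ) => f (Sum.elim p.1 p.2))]
  refine Fintype.expect_equiv (Equiv.sumArrowEquivProdArrow ι ι' κ) _ _ fun x => ?_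
  congr 1
  ext i; cases i <;> rfl

/-- reindexing -/
lemma ex_reindex {ι ι' κ : Type*} [Fintype ι] [Fintype ι'] [DecidableEq ι] [DecidableEq ι']
    [Fintype κ] (e : ι ≃ ι') (f : (ι → κ) → ℝ) :
    𝔼 x, f x = 𝔼 x : ι' → κ, f (x ∘ e) := by
  refine Fintype.expect_equiv (Equiv.arrowCongr e (Equiv.refl κ)) _ _ fun x => ?_
  congr 1; ext i; simp [Equiv.arrowCongr]

/-- restriction to a subtype -/
lemma ex_restrict {ι κ : Type*} [Fintype ι] [DecidableEq ι] [Fintype κ] [Nonempty κ]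
    (p : ι → Prop) [DecidablePred p] (f : ({i // p i} → κ) → ℝ) :
    𝔼 x : ι → κ, f (fun i => x i) = 𝔼 x, f x := by
  rw [Fintype.expect_equiv (Equiv.piEquivPiSubtypeProd p (fun _ => κ))
    (fun x : ι → κ => f (fun i => x i))
    (fun q : ({i // p i} → κ) × ({i // ¬ p i} → κ) => f q.1) (fun x => rfl), ex_prod]
  refine expect_congr rfl fun x _ => ?_
  exact Fintype.expect_const (ι := {i // ¬ p i} → κ) (f x)

/-- A point of a combinatorial subspace. -/
def ev {ι η κ : Type*} (φ : ι → κ ⊕ η) (x : η → κ) : ι → κ := fun i => Sum.elim id x (φ i)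

def Proper {ι η κ : Type*} (φ : ι → κ ⊕ η) : Prop := ∀ e, ∃ i, φ i = Sum.inr e

def pt {ι κ : Type*} (L : ι → Option κ) (a : κ) : ι → κ := fun i => (L i).getD a

/-- line-free -/
def LF {ι κ : Type*} (A : Set (ι → κ)) : Prop :=
  ∀ L : ι → Option κ, (∃ i, L i = none) → ¬ ∀ a, pt L a ∈ A

lemma ev_inj {ι η κ : Type*} {φ : ι → κ ⊕ η} (h : Proper φ) : Function.Injective (ev φ) := by
  intro x y hxy
  ext e
  obtain ⟨i, hi⟩ := h e
  have := congrFun hxy i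
  simpa [ev, hi] using this

/-- composition of subspaces -/
def cmp {ι η ζ κ : Type*} (φ : ι → κ ⊕ η) (ψ : η → κ ⊕ ζ) : ι → κ ⊕ ζ :=
  fun i => Sum.elim Sum.inl ψ (φ i)

lemma ev_cmp {ι η ζ κ : Type*} (φ : ι → κ ⊕ η) (ψ : η → κ ⊕ ζ) (x : ζ → κ) :
    ev (cmp φ ψ) x = ev φ (ev ψ x) := by
  ext i
  simp only [ev, cmp]
  cases φ i <;> simp [ev]

lemma Proper.cmp {ι η ζ κ : Type*} {φ : ι → κ ⊕ η} {ψ : η → κ ⊕ ζ} (h : Proper φ)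
    (h' : Proper ψ) : Proper (cmp φ ψ) := by
  intro e
  obtain ⟨j, hj⟩ := h' e
  obtain ⟨i, hi⟩ := h j
  exact ⟨i, by simp [SzRD.cmp, hi, hj]⟩

lemma LF.pre {ι η κ : Type*} {A : Set (ι → κ)} (hA : LF A) {φ : ι → κ ⊕ η} (h : Proper φ) :
    LF (ev φ ⁻¹' A) := by
  intro L ⟨e, he⟩ hL
  refine hA (fun i => Sum.elim some L (φ i)) ?_ ?_
  · obtain ⟨i, hi⟩ := h e
    exact ⟨i, by simp [hi, he]⟩
  · intro a
    have := hL a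
    simp only [Set.mem_preimage] at this
    convert this using 1
    ext i
    simp only [pt, ev]
    cases φ i <;> simp [pt]

/-- fixing the left coordinates -/
lemma LF.fixL {ι ι' κ : Type*} {A : Set (ι ⊕ ι' → κ)} (hA : LF A) (x : ι → κ) :
    LF {y : ι' → κ | Sum.elim x y ∈ A} := by
  have := hA.pre (φ := (Sum.elim (fun i => Sum.inl (x i)) (fun j => Sum.inr j) : ι ⊕ ι' → κ ⊕ ι'))
    (fun e => ⟨Sum.inr e, rfl⟩)
  convert this using 1
  ext y
  simp only [Set.mem_ofPred_eq, Set.mem_preimage]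
  have : Sum.elim x y = ev (Sum.elim (fun i => Sum.inl (x i)) (fun j => Sum.inr j) : ι ⊕ ι' → κ ⊕ ι') y := by
    ext i; cases i <;> simp [ev]
  rw [this]

lemma LF.fixR {ι ι' κ : Type*} {A : Set (ι ⊕ ι' → κ)} (hA : LF A) (y : ι' → κ) :
    LF {x : ι → κ | Sum.elim x y ∈ A} := by
  have := hA.pre (φ := (Sum.elim (fun i => Sum.inr i) (fun j => Sum.inl (y j)) : ι ⊕ ι' → κ ⊕ ι))
    (fun e => ⟨Sum.inl e, rfl⟩)
  convert this using 1
  ext x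
  simp only [Set.mem_ofPred_eq, Set.mem_preimage]
  have : Sum.elim x y = ev (Sum.elim (fun i => Sum.inr i) (fun j => Sum.inl (y j)) : ι ⊕ ι' → κ ⊕ ι) x := by
    ext i; cases i <;> simp [ev]
  rw [this]

lemma exists_split {ι : Type} [Fintype ι] {a b : ℕ} (h : a + b ≤ Fintype.card ι) :
    ∃ c, b ≤ c ∧ Nonempty (ι ≃ Fin a ⊕ Fin c) := by
  refine ⟨Fintype.card ι - a, by omega, ⟨Fintype.equivOfCardEq ?_⟩⟩
  simp; omega

def DHJ (κ : Type) [Fintype κ] : Prop :=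
  ∀ δ : ℝ, 0 < δ → ∃ n : ℕ, ∀ (ι : Type) [Fintype ι] [DecidableEq ι], n ≤ Fintype.card ι →
    ∀ A : Set (ι → κ), δ ≤ den A → ¬ LF A

/-- pigeonhole from averages -/
lemma exists_frac {Ω : Type*} [Fintype Ω] {f : Ω → ℝ} (h1 : ∀ x, f x ≤ 1) {c : ℝ}
    (hc : 0 ≤ c) : 𝔼 x, f x ≤ den {x | c ≤ f x} + c := by
  rcases isEmpty_or_nonempty Ω with hΩ | hΩ
  · simp [den, Finset.univ_eq_empty, hc]
  have : (c : ℝ) = 𝔼 x : Ω, c := (Fintype.expect_const _).symm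
  rw [den, this, ← expect_add_distrib]
  refine ex_mono fun x => ?_
  by_cases hx : c ≤ f x
  · rw [ind_pos (by simpa [← this] using hx)]; linarith [h1 x]
  · rw [ind_neg (by simpa [← this] using hx)]; linarith [not_le.1 hx]

/-- multidimensional DHJ -/
def MDHJ (κ : Type) [Fintype κ] (m : ℕ) : Prop :=
  ∀ δ : ℝ, 0 < δ → ∃ n : ℕ, ∀ (ι : Type) [Fintype ι] [DecidableEq ι], n ≤ Fintype.card ι →
    ∀ A : Set (ι → κ), δ ≤ den A → ∃ φ : ι → κ ⊕ Fin m, Proper φ ∧ ∀ x, ev φ x ∈ A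

/-- pigeonhole over finitely many colours -/
lemma exists_color {Ω C : Type*} [Fintype Ω] [Fintype C] {δ : ℝ} {S : Set Ω} (hS : δ ≤ den S)
    (hδ : 0 < δ)
    (T : C → Set Ω) (h : ∀ x ∈ S, ∃ c, x ∈ T c) : ∃ c, δ / Fintype.card C ≤ den (T c) := by
  have key : den S ≤ ∑ c, den (T c) := by
    simp only [den]
    rw [← Finset.expect_sum_comm]
    refine ex_mono fun x => ?_
    by_cases hx : x ∈ S
    · obtain ⟨c, hc⟩ := h x hx
      rw [ind_pos hx, ← ind_pos hc]
      exact single_le_sum (f := fun c => ind (T c) x) (fun c _ => ind_nonneg _ _) (mem_univ c)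
    · rw [ind_neg hx]; exact sum_nonneg fun c _ => ind_nonneg _ _
  have hne : (univ : Finset C).Nonempty := by
    by_contra hne
    rw [not_nonempty_iff_eq_empty] at hne
    rw [hne] at key; simp at key; linarith
  have : ∑ c : C, δ / Fintype.card C ≤ ∑ c, den (T c) := by
    rw [sum_const, nsmul_eq_mul, card_univ]
    have : (Fintype.card C : ℝ) ≠ 0 := by
      rw [← card_univ]; exact_mod_cast hne.card_pos.ne'
    field_simp
    linarith
  obtain ⟨c, -, hc⟩ := exists_le_of_sum_le hne this
  exact ⟨c, hc⟩

end SzRD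

namespace SzRD
open Finset
open scoped BigOperators

lemma den_reindex {ι ι' κ : Type*} [Fintype ι] [Fintype ι'] [DecidableEq ι] [DecidableEq ι']
    [Fintype κ] (e : ι ≃ ι') (A : Set (ι → κ)) :
    den A = den {x : ι' → κ | x ∘ e ∈ A} := by
  rw [den, ex_reindex e]; rfl

lemma den_sum {ι ι' κ : Type*} [Fintype ι] [Fintype ι'] [DecidableEq ι] [DecidableEq ι']
    [Fintype κ] (A : Set (ι ⊕ ι' → κ)) :
    den A = 𝔼 y : ι' → κ, den {x : ι → κ | Sum.elim x y ∈ A} := by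
  rw [den, ex_sum, ex_comm]; rfl

theorem mdhj {κ : Type} [Fintype κ] [Nonempty κ] (h : DHJ κ) (m : ℕ) : MDHJ κ m := by
  classical
  induction m with
  | zero =>
    intro δ hδ
    refine ⟨0, fun ι _ _ _ A hA => ?_⟩
    have : ∃ x, x ∈ A := by
      by_contra hne
      push Not at hne
      have : den A = 0 := expect_eq_zero fun x _ => ind_neg (hne x)
      linarith
    obtain ⟨x, hx⟩ := this
    exact ⟨fun i => Sum.inl (x i), fun e => e.elim0, fun y => hx⟩
  | succ m ih =>
    intro δ hδ
    obtain ⟨n1, h1⟩ := h (δ / 2) (by positivity)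
    set K := Fintype.card (Fin n1 → Option κ) with hK
    have hKpos : (0 : ℝ) < K := by
      have : 0 < Fintype.card (Fin n1 → Option κ) := Fintype.card_pos
      exact_mod_cast this
    obtain ⟨n2, h2⟩ := ih (δ / 2 / K) (by positivity)
    refine ⟨n1 + n2, fun ι _ _ hι A hA => ?_⟩
    obtain ⟨c, hc, ⟨e⟩⟩ := exists_split hι
    rw [den_reindex e, den_sum] at hA
    set B := {x : Fin n1 ⊕ Fin c → κ | x ∘ e ∈ A} with hB
    have hfr := exists_frac (f := fun y : Fin c → κ => den {x : Fin n1 → κ | Sum.elim x y ∈ B})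
      (fun y => den_le_one _) (c := δ / 2) (by positivity)
    obtain ⟨L, hL⟩ := exists_color (C := Fin n1 → Option κ) (δ := δ / 2)
      (S := {y : Fin c → κ | δ / 2 ≤ den {x : Fin n1 → κ | Sum.elim x y ∈ B}})
      (by linarith) (by positivity)
      (fun L => {y | (∃ i, L i = none) ∧ ∀ a, Sum.elim (pt L a) y ∈ B}) (by
        intro y hy
        have := h1 (Fin n1) (by simp) _ hy
        simp only [LF, not_forall] at this
        obtain ⟨L, hL, hL'⟩ := this
        exact ⟨L, hL, fun a => by_contra fun h => hL' ⟨a, h⟩⟩)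
    obtain ⟨φ, hφ, hφA⟩ := h2 (Fin c) (by simpa using hc) _ hL
    obtain ⟨⟨i0, hi0⟩, -⟩ := hφA (fun _ => Classical.arbitrary κ)
    refine ⟨fun i => Sum.elim (fun i => ((L i).elim (Sum.inr 0) Sum.inl : κ ⊕ Fin (m+1)))
      (fun j => Sum.map id Fin.succ (φ j)) (e i), ?_, ?_⟩
    · intro a
      refine Fin.cases ?_ (fun a => ?_) a
      · exact ⟨e.symm (Sum.inl i0), by simp [hi0]⟩
      · obtain ⟨j, hj⟩ := hφ a
        exact ⟨e.symm (Sum.inr j), by simp [hj]⟩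
    · intro x
      have := (hφA (fun a => x a.succ)).2 (x 0)
      have h3 : Sum.elim (pt L (x 0)) (ev φ fun a => x a.succ) ∘ e ∈ A := this
      convert h3 using 1
      ext i
      simp only [ev, Function.comp]
      rcases e i with j | j
      · simp only [Sum.elim_inl, pt]
        cases L j <;> simp
      · simp only [Sum.elim_inr, ev]
        cases φ j <;> simp

/-- replacing the active letters of `s` by those of `b` -/
noncomputable def star {ι E B : Type*} (τ : B → E) (s : ι → E) (b : ι → B) : ι → E := by
  classical exact fun j => if s j ∈ Set.range τ then τ (b j) else s j

lemma ex_star {ι E B : Type*} [Fintype ι] [DecidableEq ι] [Fintype E] [Fintype B] [Nonempty B]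
    (τ : B → E) (hτ : Function.Injective τ) (F : (ι → E) → ℝ) :
    𝔼 s, F s = 𝔼 s, 𝔼 b : ι → B, F (star τ s b) := by
  classical
  let p : E × B → E × B := fun x => if h : x.1 ∈ Set.range τ then (τ x.2, h.choose) else x
  have hp : Function.Involutive p := by
    rintro ⟨e, b⟩
    by_cases h : e ∈ Set.range τ
    · have h2 : p (e, b) = (τ b, h.choose) := by simp only [p]; rw [dif_pos h]
      have h3 : τ b ∈ Set.range τ := ⟨b, rfl⟩
      rw [h2]
      have h4 : p (τ b, h.choose) = (τ h.choose, h3.choose) := by simp only [p]; rw [dif_pos h3]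
      rw [h4, h.choose_spec, hτ h3.choose_spec]
    · have h2 : p (e, b) = (e, b) := by simp only [p]; rw [dif_neg h]
      rw [h2, h2]
  have e1 : 𝔼 s, F s = 𝔼 q : (ι → E × B), F (fun i => (q i).1) := by
    rw [Fintype.expect_equiv (Equiv.arrowProdEquivProdArrow ι (fun _ => E) (fun _ => B))
      (fun q : ι → E × B => F (fun i => (q i).1)) (fun r : (ι → E) × (ι → B) => F r.1)
      (fun q => rfl), ex_prod]
    refine expect_congr rfl fun x _ => ?_
    exact (Fintype.expect_const (ι := ι → B) (F x)).symm
  have e2 : 𝔼 q : (ι → E × B), F (fun i => (q i).1)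
      = 𝔼 q : (ι → E × B), F (fun i => (p (q i)).1) := by
    refine (Fintype.expect_equiv (Equiv.arrowCongr (Equiv.refl ι) (hp.toPerm p)) _ _
      fun x => ?_).symm
    rfl
  rw [e1, e2, Fintype.expect_equiv (Equiv.arrowProdEquivProdArrow ι (fun _ => E) (fun _ => B))
      (fun q : ι → E × B => F (fun i => (p (q i)).1))
      (fun r : (ι → E) × (ι → B) => F (star τ r.1 r.2)) (fun q => ?_), ex_prod]
  congr 1
  ext i
  by_cases h : (q i).1 ∈ Set.range τ
  · simp only [p, star]
    rw [dif_pos h, if_pos (show ((Equiv.arrowProdEquivProdArrow ι (fun x => E) fun x => B) q).1 i ∈ Set.range τ from h)]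
    rfl
  · simp only [p, star]
    rw [dif_neg h, if_neg (show ¬ ((Equiv.arrowProdEquivProdArrow ι (fun x => E) fun x => B) q).1 i ∈ Set.range τ from h)]
    rfl

lemma ex_pi_prod {ι E : Type*} [Fintype ι] [DecidableEq ι] [Fintype E] (w : E → ℝ) :
    𝔼 s : ι → E, ∏ i, w (s i) = (𝔼 e, w e) ^ Fintype.card ι := by
  rw [Fintype.expect_eq_sum_div_card, Fintype.expect_eq_sum_div_card, div_pow,
    Fintype.card_fun, Nat.cast_pow]
  congr 1
  have := Finset.prod_univ_sum (fun _ : ι => (univ : Finset E)) (fun _ e => w e)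
  simp only [prod_const, card_univ, Fintype.piFinset_univ] at this
  exact this.symm

/-- few active letters is unlikely -/
lemma few_active {E B : Type*} [Fintype E] [Fintype B] [Nonempty B]
    (τ : B → E) (m : ℕ) {ε : ℝ} (hε : 0 < ε) :
    ∃ n : ℕ, ∀ (ι : Type) [Fintype ι] [DecidableEq ι], n ≤ Fintype.card ι →
      den {s : ι → E | Nat.card {j // s j ∈ Set.range τ} < m} ≤ ε := by
  classical
  have : Nonempty E := ⟨τ (Classical.arbitrary B)⟩
  set w : E → ℝ := fun e => if e ∈ Set.range τ then 1/2 else 1 with hw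
  set r : ℝ := 𝔼 e, w e with hr
  have hw0 : ∀ e, 0 ≤ w e := fun e => by simp only [hw]; split_ifs <;> norm_num
  have hw1 : ∀ e, w e ≤ 1 := fun e => by simp only [hw]; split_ifs <;> norm_num
  have hr0 : 0 ≤ r := expect_nonneg fun e _ => hw0 e
  have hr1 : r < 1 := by
    rw [hr, Fintype.expect_eq_sum_div_card, div_lt_one (by exact_mod_cast Fintype.card_pos)]
    have : ∑ e : E, w e < ∑ e : E, (1 : ℝ) := by
      refine sum_lt_sum (fun e _ => hw1 e) ⟨τ (Classical.arbitrary B), mem_univ _, ?_⟩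
      simp only [hw]; rw [if_pos ⟨_, rfl⟩]; norm_num
    simpa using this
  obtain ⟨n, hn⟩ := exists_pow_lt_of_lt_one (show 0 < ε / 2 ^ m by positivity) hr1
  refine ⟨n, fun ι _ _ hι => ?_⟩
  have h1 : den {s : ι → E | Nat.card {j // s j ∈ Set.range τ} < m}
      ≤ 𝔼 s : ι → E, 2 ^ m * ∏ i, w (s i) := by
    refine ex_mono fun s => ?_
    have hprod : ∏ i, w (s i) = (1/2 : ℝ) ^ (Nat.card {j // s j ∈ Set.range τ}) := by
      simp only [hw]
      rw [prod_ite]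
      simp only [prod_const, one_pow, mul_one]
      rw [Nat.card_eq_fintype_card, Fintype.card_subtype]
    by_cases hs : Nat.card {j // s j ∈ Set.range τ} < m
    · have hs' : s ∈ {s : ι → E | Nat.card {j // s j ∈ Set.range τ} < m} := hs
      rw [ind_pos hs', hprod]
      rw [one_div, inv_pow, ← div_eq_mul_inv, le_div_iff₀ (by positivity), one_mul]
      exact pow_le_pow_right₀ (by norm_num) hs.le
    · have hs' : s ∉ {s : ι → E | Nat.card {j // s j ∈ Set.range τ} < m} := hs
      rw [ind_neg hs', hprod]; positivity
  refine h1.trans ?_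
  rw [← mul_expect, ex_pi_prod]
  have : r ^ Fintype.card ι ≤ r ^ n := pow_le_pow_of_le_one hr0 hr1.le hι
  have h2 : r ^ Fintype.card ι ≤ ε / 2 ^ m := by linarith
  calc (2:ℝ) ^ m * r ^ Fintype.card ι ≤ 2 ^ m * (ε / 2 ^ m) := by gcongr
    _ = ε := by field_simp

/-- the mixture lemma -/
lemma mix {E B : Type*} [Fintype E] [Fintype B] [Nonempty B]
    (τ : B → E) (hτ : Function.Injective τ) (m : ℕ) {ε : ℝ} (hε : 0 < ε) (K : ℝ) (hK : 0 < K) :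
    ∃ n : ℕ, ∀ (ι : Type) [Fintype ι] [DecidableEq ι], n ≤ Fintype.card ι →
      ∀ F : (ι → E) → ℝ, (∀ s, |F s| ≤ K) →
      ∃ s : ι → E, m ≤ Nat.card {j // s j ∈ Set.range τ} ∧
        𝔼 s, F s - ε ≤ 𝔼 b : ι → B, F (star τ s b) := by
  classical
  have : Nonempty E := ⟨τ (Classical.arbitrary B)⟩
  obtain ⟨n, hn⟩ := few_active τ m (ε := ε / (4 * (K + ε))) (by positivity)
  refine ⟨n, fun ι _ _ hι F hF => ?_⟩
  have h0 := hn ι hι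
  by_contra hcon
  push Not at hcon
  have hav : |𝔼 s, F s| ≤ K :=
    (abs_expect_le _ _).trans (expect_le univ_nonempty fun s _ => hF s)
  have h1 : 𝔼 s, F s ≤ 𝔼 s : ι → E, ((𝔼 s, F s - ε) +
      2 * K * ind {s : ι → E | Nat.card {j // s j ∈ Set.range τ} < m} s
      + ε * ind {s : ι → E | Nat.card {j // s j ∈ Set.range τ} < m} s) := by
    conv_lhs => rw [ex_star τ hτ F]
    refine ex_mono fun s => ?_
    by_cases hs : Nat.card {j // s j ∈ Set.range τ} < m
    · have hs' : s ∈ {s : ι → E | Nat.card {j // s j ∈ Set.range τ} < m} := hs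
      rw [ind_pos hs']
      have : 𝔼 b : ι → B, F (star τ s b) ≤ K :=
        expect_le univ_nonempty fun b _ => (abs_le.1 (hF _)).2
      linarith [(abs_le.1 hav).1]
    · have hs' : s ∉ {s : ι → E | Nat.card {j // s j ∈ Set.range τ} < m} := hs
      rw [ind_neg hs']
      have := hcon s (not_lt.1 hs)
      linarith
  rw [expect_add_distrib, expect_add_distrib, ← mul_expect, ← mul_expect,
    Fintype.expect_const] at h1
  change _ ≤ _ + 2 * K * den _ + ε * den _ at h1
  have h2 : (2 * K + ε) * den {s : ι → E | Nat.card {j // s j ∈ Set.range τ} < m} ≤ ε / 2 := by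
    calc _ ≤ (2 * K + ε) * (ε / (4 * (K + ε))) := by gcongr
      _ ≤ (2 * (K + ε)) * (ε / (4 * (K + ε))) := by gcongr; linarith
      _ = ε / 2 := by field_simp; norm_num
  linarith

end SzRD

namespace SzRD
open Finset
open scoped BigOperators

lemma insA {κ : Type} [Fintype κ] [Nonempty κ] (h : DHJ κ) (i : κ) (m : ℕ) {β : ℝ} (hβ : 0 < β) :
    ∃ n : ℕ, ∀ (ι : Type) [Fintype ι] [DecidableEq ι], n ≤ Fintype.card ι →
      ∀ Q : Set (ι → κ), β ≤ 𝔼 z : ι → Option κ, ind Q (pt z i) →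
      ∃ φ : ι → Option κ ⊕ Fin m, Proper φ ∧ ∀ w, pt (ev φ w) i ∈ Q := by
  classical
  obtain ⟨n1, h1⟩ := mdhj h m (β / 2) (by positivity)
  obtain ⟨n, hn⟩ := mix (some : κ → Option κ) (Option.some_injective κ) n1
    (ε := β / 2) (by positivity) 1 one_pos
  refine ⟨n, fun ι _ _ hι Q hQ => ?_⟩
  obtain ⟨s, hs, hF⟩ := hn ι hι (fun z => ind Q (pt z i))
    (fun z => abs_le.2 ⟨by linarith [ind_nonneg Q (pt z i)], ind_le_one _ _⟩)
  let ext : ({j // s j ∈ Set.range some} → κ) → (ι → κ) :=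
    fun x j => if h : s j ∈ Set.range some then x ⟨j, h⟩ else i
  have e1 : 𝔼 b : ι → κ, ind Q (pt (star some s b) i) = den {x | ext x ∈ Q} := by
    rw [den, ← ex_restrict]
    refine expect_congr rfl fun b _ => ind_congr ?_
    rw [Set.mem_ofPred_eq]
    have : pt (star some s b) i = ext (fun j => b j) := by
      ext j
      simp only [pt, star, ext]
      split_ifs with hj
      · rfl
      · have : s j = none := by
          by_contra hne
          obtain ⟨a, ha⟩ := Option.ne_none_iff_exists.1 hne
          exact hj ⟨a, ha⟩
        simp [this]
    rw [this]
  obtain ⟨φ', hp, hφ'⟩ := h1 {j // s j ∈ Set.range some}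
    (by rwa [Nat.card_eq_fintype_card] at hs) {x | ext x ∈ Q} (by rw [← e1]; linarith)
  refine ⟨fun j => if h : s j ∈ Set.range some then Sum.map some id (φ' ⟨j, h⟩)
    else Sum.inl (some i), ?_, ?_⟩
  · intro e
    obtain ⟨⟨j, hj⟩, hj'⟩ := hp e
    exact ⟨j, by beta_reduce; rw [dif_pos hj, hj']; rfl⟩
  · intro w
    have := hφ' (pt w i)
    rw [Set.mem_ofPred_eq] at this
    convert this using 1
    ext j
    simp only [pt, ev, ext]
    split_ifs with hj
    · cases φ' ⟨j, hj⟩ <;> simp [pt]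
    · simp

lemma sum_range_inj {X Y : Type*} [Fintype X] [Fintype Y] {f : X → Y}
    (hf : Function.Injective f) (g : Y → ℝ) :
    ∑ y, g y * ind (Set.range f) y = ∑ x, g (f x) := by
  classical
  rw [← sum_image (s := univ) (g := f) (f := g) (fun a _ b _ h => hf h)]
  rw [← sum_subset (subset_univ (univ.image f))]
  · refine sum_congr rfl fun y hy => ?_
    rw [ind_pos (by simpa using hy), mul_one]
  · intro y _ hy
    rw [ind_neg (by simpa using hy), mul_zero]

lemma insB {κ : Type} [Fintype κ] [Nonempty κ] (h : DHJ κ) (i : κ) (m : ℕ) {β : ℝ} (hβ : 0 < β) :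
    ∃ M : ℕ, ∃ τ : ℝ, 0 < τ ∧ τ ≤ 1 ∧ ∀ T : ℕ, ∀ (ι : Type) [Fintype ι] [DecidableEq ι],
      M * T ≤ Fintype.card ι → ∀ f : (ι → Option κ) → ℝ, (∀ z, f z ≤ 1) →
      (∀ φ : ι → Option κ ⊕ Fin m, Proper φ → 𝔼 w, f (ev φ w) ≤ 0) →
      ∀ Q : Set (ι → κ), 𝔼 z, f z * ind Q (pt z i) ≤
        β + (1 - τ) ^ T * 𝔼 z : ι → Option κ, ind Q (pt z i) := by
  classical
  obtain ⟨M, hM⟩ := insA h i m (β := β / 2) (by positivity)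
  set NM : ℝ := ((Fintype.card (Fin M → Option κ) : ℕ) : ℝ) with hNM
  have hNM1 : 1 ≤ NM := by
    have : 1 ≤ Fintype.card (Fin M → Option κ) := Fintype.card_pos
    rw [hNM]; exact_mod_cast this
  refine ⟨M, min 1 (β / 2 / NM), by positivity, min_le_left _ _, ?_⟩
  set τ := min 1 (β / 2 / NM) with hτ
  have hτ0 : 0 < τ := by positivity
  have hτ1 : τ ≤ 1 := min_le_left _ _
  have hM' := hM (Fin M) (by simp)
  choose φ hφp hφQ using hM'
  set R : Set (Fin M → κ) → Set (Fin M → Option κ) := fun S =>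
    {x | ∃ hS : β / 2 ≤ 𝔼 z : Fin M → Option κ, ind S (pt z i), x ∈ Set.range (ev (φ S hS))}
    with hR
  have R1 : ∀ S x, x ∈ R S → pt x i ∈ S := by
    rintro S x ⟨hS, w, rfl⟩
    exact hφQ S hS w
  have R2 : ∀ (S) (g : (Fin M → Option κ) → ℝ),
      (∀ ψ : Fin M → Option κ ⊕ Fin m, Proper ψ → 𝔼 w, g (ev ψ w) ≤ 0) →
      𝔼 x, g x * ind (R S) x ≤ 0 := by
    intro S g hg
    by_cases hS : β / 2 ≤ 𝔼 z : Fin M → Option κ, ind S (pt z i)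
    · have : R S = Set.range (ev (φ S hS)) := by
        ext x; constructor
        · rintro ⟨_, hx⟩; exact hx
        · intro hx; exact ⟨hS, hx⟩
      rw [this, Fintype.expect_eq_sum_div_card, sum_range_inj (ev_inj (hφp S hS)),
        ← Fintype.card_mul_expect]
      refine div_nonpos_of_nonpos_of_nonneg ?_ (by positivity)
      exact mul_nonpos_of_nonneg_of_nonpos (by positivity) (hg _ (hφp S hS))
    · refine le_of_eq (expect_eq_zero fun x _ => ?_)
      have hx : x ∉ R S := by rintro ⟨h, _⟩; exact hS h
      rw [ind_neg hx, mul_zero]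
  have R3 : ∀ S, β / 2 ≤ 𝔼 z : Fin M → Option κ, ind S (pt z i) →
      1 / NM ≤ 𝔼 x, ind (R S) x := by
    intro S hS
    rw [Fintype.expect_eq_sum_div_card]
    gcongr
    have hx : ev (φ S hS) (fun _ => none) ∈ R S := ⟨hS, _, rfl⟩
    rw [← ind_pos hx]
    exact single_le_sum (f := fun x => ind (R S) x) (fun c _ => ind_nonneg _ _) (mem_univ _)
  intro T
  induction T with
  | zero =>
    intro ι _ _ _ f hf1 _ Q
    simp only [pow_zero, one_mul]
    have : 𝔼 z, f z * ind Q (pt z i) ≤ 𝔼 z : ι → Option κ, ind Q (pt z i) := by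
      refine ex_mono fun z => ?_
      have := mul_le_mul_of_nonneg_right (hf1 z) (ind_nonneg Q (pt z i))
      linarith
    linarith
  | succ T ih =>
    intro ι _ _ hι f' hf1' hfφ' Q'
    obtain ⟨c, hc, ⟨e⟩⟩ := exists_split (a := M) (b := M * T) (ι := ι) (by linarith [hι])
    rw [ex_reindex e, ex_reindex e (fun z => ind Q' (pt z i))]
    set f : (Fin M ⊕ Fin c → Option κ) → ℝ := fun z => f' (z ∘ e) with hf
    set Q : Set (Fin M ⊕ Fin c → κ) := {x | x ∘ e ∈ Q'} with hQ
    have hf1 : ∀ z, f z ≤ 1 := fun z => hf1' _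
    have hfφ : ∀ φ : Fin M ⊕ Fin c → Option κ ⊕ Fin m, Proper φ → 𝔼 w, f (ev φ w) ≤ 0 := by
      intro φ hφ
      refine hfφ' (φ ∘ e) ?_
      intro a
      obtain ⟨j, hj⟩ := hφ a
      exact ⟨e.symm j, by simp [hj]⟩
    have hQe : ∀ z : Fin M ⊕ Fin c → Option κ, ind Q' (pt (z ∘ e) i) = ind Q (pt z i) :=
      fun z => ind_congr Iff.rfl
    simp only [hQe]
    change 𝔼 z, f z * ind Q (pt z i) ≤ _
    set p := 𝔼 z : Fin M ⊕ Fin c → Option κ, ind Q (pt z i) with hp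
    have hp0 : 0 ≤ p := expect_nonneg fun _ _ => ind_nonneg _ _
    have hp1 : p ≤ 1 := ex_le_one fun _ => ind_le_one _ _
    have hlam : 0 ≤ (1 - τ) ^ T := pow_nonneg (by linarith) _
    by_cases hpβ : p < β
    · have : 𝔼 z, f z * ind Q (pt z i) ≤ p := by
        refine ex_mono fun z => ?_
        have := mul_le_mul_of_nonneg_right (hf1 z) (ind_nonneg Q (pt z i))
        linarith
      have : 0 ≤ (1 - τ) ^ (T + 1) * p := mul_nonneg (pow_nonneg (by linarith) _) hp0
      linarith
    push Not at hpβ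
    set S : (Fin c → κ) → Set (Fin M → κ) := fun y => {x | Sum.elim x y ∈ Q} with hS
    set Qx : (Fin M → Option κ) → Set (Fin c → κ) := fun x =>
      {y | Sum.elim (pt x i) y ∈ Q ∧ x ∉ R (S y)} with hQx
    have hpt : ∀ (x : Fin M → Option κ) (y : Fin c → Option κ),
        pt (Sum.elim x y) i = Sum.elim (pt x i) (pt y i) := by
      intro x y; ext j; cases j <;> rfl
    have hdec : ∀ (x : Fin M → Option κ) (y : Fin c → Option κ),
        ind Q (pt (Sum.elim x y) i) = ind (R (S (pt y i))) x + ind (Qx x) (pt y i) := by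
      intro x y
      rw [hpt]
      by_cases hxR : x ∈ R (S (pt y i))
      · have h2 : Sum.elim (pt x i) (pt y i) ∈ Q := R1 _ _ hxR
        rw [ind_pos hxR, ind_pos h2, ind_neg (fun h3 => h3.2 hxR), add_zero]
      · rw [ind_neg hxR, zero_add]
        exact ind_congr ⟨fun h => ⟨h, hxR⟩, fun h => h.1⟩
    -- the removed part
    have hrem : 1 / NM * (β / 2) ≤ 𝔼 y : Fin c → Option κ, 𝔼 x, ind (R (S (pt y i))) x := by
      have hfr := exists_frac (f := fun y : Fin c → Option κ =>
        𝔼 x : Fin M → Option κ, ind (S (pt y i)) (pt x i))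
        (fun y => ex_le_one fun _ => ind_le_one _ _) (c := β / 2) (by positivity)
      have hpe : p = 𝔼 y : Fin c → Option κ, 𝔼 x : Fin M → Option κ, ind (S (pt y i)) (pt x i) := by
        rw [hp, ex_sum, ex_comm]
        refine expect_congr rfl fun y _ => expect_congr rfl fun x _ => ?_
        rw [hpt]; exact ind_congr Iff.rfl
      rw [← hpe] at hfr
      have h3 : β / 2 ≤ den {y : Fin c → Option κ | β / 2 ≤ 𝔼 x : Fin M → Option κ, ind (S (pt y i)) (pt x i)} := by linarith
      calc 1 / NM * (β / 2) ≤ 1 / NM * den {y : Fin c → Option κ | β / 2 ≤ 𝔼 x : Fin M → Option κ, ind (S (pt y i)) (pt x i)} := by gcongr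
        _ ≤ _ := by
          rw [den, mul_expect]
          refine ex_mono fun y => ?_
          by_cases hy : y ∈ {y : Fin c → Option κ | β / 2 ≤ 𝔼 x : Fin M → Option κ, ind (S (pt y i)) (pt x i)}
          · rw [ind_pos hy, mul_one]; exact R3 _ hy
          · rw [ind_neg hy, mul_zero]; exact expect_nonneg fun _ _ => ind_nonneg _ _
    have hpsum : p = 𝔼 y : Fin c → Option κ, 𝔼 x, ind (R (S (pt y i))) x
        + 𝔼 x : Fin M → Option κ, 𝔼 y : Fin c → Option κ, ind (Qx x) (pt y i) := by
      rw [hp, ex_sum, ex_comm (fun (y : Fin c → Option κ) x => ind (R (S (pt y i))) x),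
        ← expect_add_distrib]
      refine expect_congr rfl fun x _ => ?_
      rw [← expect_add_distrib]
      exact expect_congr rfl fun y _ => hdec x y
    have hmain : 𝔼 z, f z * ind Q (pt z i) =
        𝔼 y : Fin c → Option κ, 𝔼 x, f (Sum.elim x y) * ind (R (S (pt y i))) x
        + 𝔼 x : Fin M → Option κ, 𝔼 y : Fin c → Option κ, f (Sum.elim x y) * ind (Qx x) (pt y i) := by
      rw [ex_sum, ex_comm (fun (y : Fin c → Option κ) x => f (Sum.elim x y) * ind (R (S (pt y i))) x),
        ← expect_add_distrib]
      refine expect_congr rfl fun x _ => ?_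
      rw [← expect_add_distrib]
      refine expect_congr rfl fun y _ => ?_
      rw [hdec x y]; ring
    have hA1 : 𝔼 y : Fin c → Option κ, 𝔼 x, f (Sum.elim x y) * ind (R (S (pt y i))) x ≤ 0 := by
      refine expect_le univ_nonempty fun y _ => R2 _ (fun x => f (Sum.elim x y)) fun ψ hψ => ?_
      have := hfφ (Sum.elim ψ (fun j => Sum.inl (y j))) (fun a => by
        obtain ⟨j, hj⟩ := hψ a
        exact ⟨Sum.inl j, by simp [hj]⟩)
      convert this using 3 with w
      congr 1
      ext j; cases j <;> simp [ev]
    have hA2 : 𝔼 x : Fin M → Option κ, 𝔼 y : Fin c → Option κ, f (Sum.elim x y) * ind (Qx x) (pt y i)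
        ≤ β + (1 - τ) ^ T * 𝔼 x : Fin M → Option κ, 𝔼 y : Fin c → Option κ, ind (Qx x) (pt y i) := by
      rw [mul_expect]
      conv_rhs => rw [← Fintype.expect_const (ι := Fin M → Option κ) β, ← expect_add_distrib]
      refine ex_mono fun x => ?_
      refine ih (Fin c) (by simpa using hc) (fun y => f (Sum.elim x y)) (fun y => hf1 _) ?_ (Qx x)
      intro ψ hψ
      have := hfφ (Sum.elim (fun j => Sum.inl (x j)) ψ) (fun a => by
        obtain ⟨j, hj⟩ := hψ a
        exact ⟨Sum.inr j, by simp [hj]⟩)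
      convert this using 3 with w
      congr 1
      ext j; cases j <;> simp [ev]
    rw [hmain]
    have h5 : 𝔼 x : Fin M → Option κ, 𝔼 y : Fin c → Option κ, ind (Qx x) (pt y i) ≤ p * (1 - τ) := by
      have : τ ≤ 1 / NM * (β / 2) := by
        refine (min_le_right _ _).trans (le_of_eq ?_); ring
      nlinarith
    have h6 := mul_le_mul_of_nonneg_left h5 hlam
    rw [pow_succ]
    nlinarith

end SzRD

namespace SzRD
open Finset
open scoped BigOperators

lemma insB' {κ : Type} [Fintype κ] [Nonempty κ] (h : DHJ κ) (i : κ) (m : ℕ) {β : ℝ} (hβ : 0 < β) :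
    ∃ n : ℕ, ∀ (ι : Type) [Fintype ι] [DecidableEq ι],
      n ≤ Fintype.card ι → ∀ f : (ι → Option κ) → ℝ, (∀ z, f z ≤ 1) → ∀ b : ℝ, 0 ≤ b →
      (∀ φ : ι → Option κ ⊕ Fin m, Proper φ → 𝔼 w, f (ev φ w) ≤ b) →
      ∀ Q : Set (ι → κ), 𝔼 z, f z * ind Q (pt z i) ≤ b + β := by
  classical
  obtain ⟨M, τ, h0, h1, H⟩ := insB h i m (β := β / 2) (by positivity)
  obtain ⟨T, hT⟩ := exists_pow_lt_of_lt_one (x := β / 2) (y := 1 - τ) (by positivity) (by linarith)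
  refine ⟨M * T, fun ι _ _ hι f hf b hb hφ Q => ?_⟩
  have := H T ι hι (fun z => f z - b) (fun z => by linarith [hf z]) (fun φ hp => by
    rw [expect_sub_distrib, Fintype.expect_const]; linarith [hφ φ hp]) Q
  set p := 𝔼 z : ι → Option κ, ind Q (pt z i) with hp
  have hp0 : 0 ≤ p := expect_nonneg fun _ _ => ind_nonneg _ _
  have hp1 : p ≤ 1 := ex_le_one fun _ => ind_le_one _ _
  have e : 𝔼 z, (f z - b) * ind Q (pt z i) = 𝔼 z, f z * ind Q (pt z i) - b * p := by
    rw [hp, mul_expect, ← expect_sub_distrib]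
    exact expect_congr rfl fun z _ => by ring
  rw [e] at this
  have h2 : (1 - τ) ^ T * p ≤ β / 2 := by
    calc (1 - τ) ^ T * p ≤ (1 - τ) ^ T * 1 := by
          gcongr
      _ ≤ _ := by linarith
  nlinarith

lemma insC {κ : Type} [Fintype κ] [Nonempty κ] [DecidableEq κ] (h : DHJ κ) (s : Finset κ) :
    ∀ (m : ℕ) (β : ℝ), 0 < β →
    ∃ n : ℕ, ∀ (ι : Type) [Fintype ι] [DecidableEq ι],
      n ≤ Fintype.card ι → ∀ g : (ι → Option κ) → ℝ, (∀ z, g z ≤ 1) →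
      (∀ φ : ι → Option κ ⊕ Fin m, Proper φ → 𝔼 w, g (ev φ w) ≤ 0) →
      ∀ Q : κ → Set (ι → κ), 𝔼 z, g z * ∏ i ∈ s, ind (Q i) (pt z i) ≤ β := by
  classical
  induction s using Finset.induction_on with
  | empty =>
    intro m β hβ
    refine ⟨m, fun ι _ _ hι g hg hφ Q => ?_⟩
    simp only [prod_empty, mul_one]
    obtain ⟨c, -, ⟨e⟩⟩ := exists_split (a := m) (b := 0) (ι := ι) (by simpa using hι)
    rw [ex_reindex e, ex_sum, ex_comm]
    refine le_trans ?_ hβ.le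
    refine expect_le univ_nonempty fun y _ => ?_
    have := hφ ((Sum.elim (fun j => Sum.inr j) (fun j => Sum.inl (y j)) : Fin m ⊕ Fin c → _) ∘ e)
      (fun a => ⟨e.symm (Sum.inl a), by simp⟩)
    have e2 : ∀ w : Fin m → Option κ, Sum.elim w y ∘ e = ev ((Sum.elim (fun j => Sum.inr j)
        (fun j => Sum.inl (y j)) : Fin m ⊕ Fin c → Option κ ⊕ Fin m) ∘ e) w := by
      intro w
      funext j
      simp only [ev, Function.comp_apply]
      cases e j <;> simp
    simp only [e2]
    exact this
  | insert i s his ih =>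
    intro m β hβ
    obtain ⟨m', hm'⟩ := ih m (β / 2) (by positivity)
    obtain ⟨n, hn⟩ := insB' h i m' (β := β / 2) (by positivity)
    refine ⟨n, fun ι _ _ hι g hg hφ Q => ?_⟩
    have hp0 : ∀ z : ι → Option κ, 0 ≤ ∏ i ∈ s, ind (Q i) (pt z i) :=
      fun z => prod_nonneg fun _ _ => ind_nonneg _ _
    have hp1 : ∀ z : ι → Option κ, ∏ i ∈ s, ind (Q i) (pt z i) ≤ 1 :=
      fun z => prod_le_one (fun _ _ => ind_nonneg _ _) fun _ _ => ind_le_one _ _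
    have := hn ι hι (fun z => g z * ∏ i ∈ s, ind (Q i) (pt z i))
      (fun z => by nlinarith [hp0 z, hp1 z, hg z]) (β / 2) (by positivity) (fun φ hp => by
        have := hm' (Fin m') (by simp) (fun w => g (ev φ w)) (fun z => hg _)
          (fun ψ hψ => by
            have := hφ (cmp φ ψ) (hp.cmp hψ)
            simpa only [ev_cmp] using this)
          (fun j => {x | (fun i => Sum.elim (fun o => Option.getD o j) x (φ i)) ∈ Q j})
        convert this using 3 with w
        refine prod_congr rfl fun j _ => ind_congr ?_
        rw [Set.mem_ofPred_eq]
        have : pt (ev φ w) j = (fun i => Sum.elim (fun o => Option.getD o j) (pt w j) (φ i)) := by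
          ext i; simp only [pt, ev]; cases φ i <;> simp [pt]
        rw [this]) (Q i)
    rw [show β = β / 2 + β / 2 by ring]
    refine le_trans (le_of_eq ?_) this
    refine expect_congr rfl fun z _ => ?_
    rw [prod_insert his]; ring

end SzRD

namespace SzRD
open Finset
open scoped BigOperators

lemma LF.reindex {ι ι' κ : Type*} {A : Set (ι → κ)} (hA : LF A) (e : ι ≃ ι') :
    LF {x : ι' → κ | x ∘ e ∈ A} := by
  have := hA.pre (φ := (fun i => Sum.inr (e i) : ι → κ ⊕ ι')) (fun j => ⟨e.symm j, by simp⟩)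
  exact this

lemma extremal {κ : Type} [Fintype κ] (hn : ¬ DHJ κ) : ∃ d : ℝ, 0 < d ∧ d ≤ 1 ∧
    (∀ ε : ℝ, 0 < ε → ∃ n : ℕ, ∀ (ι : Type) [Fintype ι] [DecidableEq ι], n ≤ Fintype.card ι →
      ∀ A : Set (ι → κ), LF A → den A < d + ε) ∧
    (∀ ε : ℝ, 0 < ε → ∀ n : ℕ, ∃ m, n ≤ m ∧ ∃ A : Set (Fin m → κ), LF A ∧ d - ε ≤ den A) := by
  classical
  set S : Set ℝ := {δ | ∀ n : ℕ, ∃ m, n ≤ m ∧ ∃ A : Set (Fin m → κ), LF A ∧ δ ≤ den A} with hS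
  have key : ∀ δ : ℝ, (∀ n : ℕ, ∃ (ι : Type) (_ : Fintype ι) (_ : DecidableEq ι),
      n ≤ Fintype.card ι ∧ ∃ A : Set (ι → κ), LF A ∧ δ ≤ den A) → δ ∈ S := by
    intro δ h n
    obtain ⟨ι, _, _, hc, A, hA, hδ⟩ := h n
    exact ⟨Fintype.card ι, hc, _, hA.reindex (Fintype.equivFin ι),
      by rwa [den_reindex (Fintype.equivFin ι)] at hδ⟩
  have hbd : BddAbove S := ⟨1, fun δ hδ => by
    obtain ⟨m, _, A, _, h⟩ := hδ 0
    exact h.trans (den_le_one A)⟩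
  simp only [DHJ] at hn
  push Not at hn
  obtain ⟨δ, hδ, hδS⟩ := hn
  have hδS' : δ ∈ S := key δ fun n => by
    obtain ⟨ι, i1, i2, h1, A, h2, h3⟩ := hδS n
    exact ⟨ι, i1, i2, h1, A, h3, h2⟩
  refine ⟨sSup S, lt_of_lt_of_le hδ (le_csSup hbd hδS'), csSup_le ⟨δ, hδS'⟩ ?_, ?_, ?_⟩
  · intro δ hδ
    obtain ⟨m, _, A, _, h⟩ := hδ 0
    exact h.trans (den_le_one A)
  · intro ε hε
    by_contra hcon
    push Not at hcon
    have : sSup S + ε ∈ S := key _ fun n => by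
      obtain ⟨ι, i1, i2, h1, A, h2, h3⟩ := hcon n
      exact ⟨ι, i1, i2, h1, A, h2, h3⟩
    linarith [le_csSup hbd this]
  · intro ε hε n
    obtain ⟨δ', h1, h2⟩ := exists_lt_of_lt_csSup ⟨δ, hδS'⟩ (show sSup S - ε < sSup S by linarith)
    obtain ⟨m, hm, A, hA, h⟩ := h1 n
    exact ⟨m, hm, A, hA, by linarith⟩

lemma claimX {κ : Type} [Fintype κ] [Nonempty κ] {d : ℝ}
    (hU : ∀ ε : ℝ, 0 < ε → ∃ n : ℕ, ∀ (ι : Type) [Fintype ι] [DecidableEq ι], n ≤ Fintype.card ι →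
      ∀ A : Set (ι → κ), LF A → den A < d + ε)
    (hL : ∀ ε : ℝ, 0 < ε → ∀ n : ℕ, ∃ m, n ≤ m ∧ ∃ A : Set (Fin m → κ), LF A ∧ d - ε ≤ den A)
    (m : ℕ) {η : ℝ} (hη : 0 < η) : ∃ c : ℕ, ∃ A : (Fin c → κ) → Set (Fin m → κ),
      (∀ y, LF (A y)) ∧ ∀ w, d - η ≤ 𝔼 y, ind (A y) w := by
  classical
  set Nw : ℝ := ((Fintype.card (Fin m → κ) : ℕ) : ℝ) with hNw
  have hNw1 : 1 ≤ Nw := by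
    have : 1 ≤ Fintype.card (Fin m → κ) := Fintype.card_pos
    rw [hNw]; exact_mod_cast this
  set ε := η / (2 * Nw) with hε
  have hε0 : 0 < ε := by positivity
  have hεN : 2 * Nw * ε = η := by rw [hε]; field_simp
  obtain ⟨n0, hn0⟩ := hU ε hε0
  obtain ⟨M, hM, A, hA, hd⟩ := hL ε hε0 (m + n0)
  obtain ⟨c, hc, ⟨e⟩⟩ := exists_split (a := m) (b := n0) (ι := Fin M) (by simpa using hM)
  have hA' := hA.reindex e
  rw [den_reindex e] at hd
  set B : Set (Fin m ⊕ Fin c → κ) := {x | x ∘ e ∈ A} with hB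
  refine ⟨c, fun y => {x | Sum.elim x y ∈ B}, fun y => hA'.fixR y, fun w => ?_⟩
  set f : (Fin m → κ) → ℝ := fun w => 𝔼 y, ind {x | Sum.elim x y ∈ B} w with hf
  have hfle : ∀ w, f w ≤ d + ε := by
    intro w
    have := hn0 (Fin c) (by simpa using hc) _ (hA'.fixL w)
    exact this.le
  have havg : d - ε ≤ 𝔼 w, f w := by
    rw [den, ex_sum] at hd
    exact hd
  rw [Fintype.expect_eq_sum_div_card, le_div_iff₀ (by positivity), ← hNw,
    ← add_sum_erase univ f (mem_univ w)] at havg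
  have h2 : ∑ x ∈ univ.erase w, f x ≤ (Nw - 1) * (d + ε) := by
    refine (sum_le_card_nsmul _ _ _ fun x _ => hfle x).trans (le_of_eq ?_)
    rw [card_erase_of_mem (mem_univ _), nsmul_eq_mul, card_univ, Nat.cast_sub Fintype.card_pos]
    simp [hNw]
  change d - η ≤ f w
  nlinarith

lemma nonone {κ J : Type} [Fintype κ] [Fintype J] [DecidableEq J] :
    den {w : J → Option κ | ∀ j, w j ≠ none} =
      ((Fintype.card κ : ℝ) / (Fintype.card κ + 1)) ^ Fintype.card J := by
  classical
  have : 𝔼 o : Option κ, (if o = none then (0:ℝ) else 1) =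
      (Fintype.card κ : ℝ) / (Fintype.card κ + 1) := by
    rw [Fintype.expect_eq_sum_div_card, Fintype.sum_option]; simp
  rw [← this, ← ex_pi_prod, den]
  refine expect_congr rfl fun w _ => ?_
  by_cases hw : w ∈ {w : J → Option κ | ∀ j, w j ≠ none}
  · rw [ind_pos hw]
    refine (prod_eq_one fun j _ => ?_).symm
    rw [if_neg (hw j)]
  · rw [ind_neg hw]
    rw [Set.mem_ofPred_eq] at hw
    push Not at hw
    obtain ⟨j, hj⟩ := hw
    exact (prod_eq_zero (mem_univ j) (by rw [if_pos hj])).symm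

lemma cells {κ J : Type} [Fintype κ] [DecidableEq κ] [Fintype J] [DecidableEq J]
    (g : (J → Option κ) → ℝ) {β : ℝ} (hβ : 0 ≤ β)
    (hC : ∀ Q : κ → Set (J → κ), 𝔼 z, g z * ∏ i, ind (Q i) (pt z i) ≤ β)
    (Q : κ → Set (J → κ)) :
    𝔼 z, g z ≤ 𝔼 z, g z * ∏ i, ind (Q i) (pt z i) + 2 ^ Fintype.card κ * β := by
  classical
  set Qp : (κ → Bool) → κ → Set (J → κ) := fun p i => if p i then Q i else (Q i)ᶜ with hQp
  have h1 : ∀ z, ∑ p : κ → Bool, ∏ i, ind (Qp p i) (pt z i) = 1 := by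
    intro z
    have := Finset.prod_univ_sum (fun _ : κ => (univ : Finset Bool))
      (fun i b => ind (if b then Q i else (Q i)ᶜ) (pt z i))
    simp only [Fintype.piFinset_univ] at this
    rw [hQp, ← this]
    refine prod_eq_one fun i _ => ?_
    rw [Fintype.sum_bool]
    simp only [if_true, Bool.false_eq_true, if_false]
    by_cases hz : pt z i ∈ Q i
    · rw [ind_pos hz, ind_neg (by simpa using hz), add_zero]
    · rw [ind_neg hz, ind_pos (by simpa using hz), zero_add]
  have h2 : 𝔼 z, g z = ∑ p : κ → Bool, 𝔼 z, g z * ∏ i, ind (Qp p i) (pt z i) := by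
    rw [← Finset.expect_sum_comm]
    refine expect_congr rfl fun z _ => ?_
    rw [← mul_sum, h1, mul_one]
  rw [h2, ← add_sum_erase univ _ (mem_univ (fun _ => true : κ → Bool))]
  refine add_le_add (le_of_eq ?_) ?_
  · simp [hQp]
  · refine (sum_le_card_nsmul _ _ β fun p _ => hC (Qp p)).trans ?_
    rw [nsmul_eq_mul]
    gcongr
    have : (#(univ.erase (fun _ => true : κ → Bool)) : ℝ) ≤ #(univ : Finset (κ → Bool)) := by
      exact_mod_cast card_le_card (erase_subset _ _)
    refine this.trans (le_of_eq ?_)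
    simp

end SzRD

namespace SzRD
open Finset
open scoped BigOperators

lemma exists_ge_ex {Ω : Type*} [Fintype Ω] [Nonempty Ω] {f : Ω → ℝ} {c : ℝ} (h : c ≤ 𝔼 x, f x) :
    ∃ x, c ≤ f x := by
  by_contra hcon
  push Not at hcon
  have h1 : 𝔼 x, f x < 𝔼 x : Ω, c := by
    rw [Fintype.expect_eq_sum_div_card, Fintype.expect_eq_sum_div_card]
    have : (0 : ℝ) < Fintype.card Ω := by exact_mod_cast Fintype.card_pos
    refine div_lt_div_of_pos_right ?_ this
    exact sum_lt_sum_of_nonempty univ_nonempty fun x _ => hcon x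
  rw [Fintype.expect_const] at h1
  linarith

lemma lin_ex {Ω : Type*} [Fintype Ω] [Nonempty Ω] (D A : Set Ω) (l d e : ℝ) :
    𝔼 w, (ind D w + l * (ind A w - d - e)) = den D + l * (den A - d - e) := by
  simp only [expect_add_distrib, ← mul_expect, expect_sub_distrib, Fintype.expect_const, den]

/-- the terminal contradiction -/
lemma terminal {κ J : Type} [Fintype κ] [DecidableEq κ] [Fintype J] [DecidableEq J]
    {d θ ζ : ℝ} (hd : 0 < d) (hθ : 0 < θ) (hζ : ζ = d * θ / 32)
    (A : Set (J → Option κ)) (Q : κ → Set (J → κ))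
    (hC : ∀ Q : κ → Set (J → κ), 𝔼 z, (ind A z - (d + ζ)) * ∏ i, ind (Q i) (pt z i)
      ≤ ζ / 2 ^ Fintype.card κ)
    (hA : d - ζ ≤ den A) (hD : θ / 2 ≤ den {w : J → Option κ | ∀ i, pt w i ∈ Q i})
    (hAD : ∀ w ∈ A, (∀ i, pt w i ∈ Q i) → ∀ j, w j ≠ none)
    (hsm : den {w : J → Option κ | ∀ j, w j ≠ none} ≤ ζ) : False := by
  have hζ0 : 0 < ζ := by rw [hζ]; positivity
  have h1 := cells (fun z => ind A z - (d + ζ)) (by positivity) hC Q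
  have h2 : 𝔼 z, (ind A z - (d + ζ)) = den A - (d + ζ) := by
    rw [expect_sub_distrib, Fintype.expect_const]; rfl
  have h3 : ∀ z : J → Option κ, ∏ i, ind (Q i) (pt z i) = ind {w : J → Option κ | ∀ i, pt w i ∈ Q i} z := by
    intro z
    by_cases hz : z ∈ {w : J → Option κ | ∀ i, pt w i ∈ Q i}
    · rw [ind_pos hz]; exact prod_eq_one fun i _ => ind_pos (hz i)
    · rw [ind_neg hz]
      rw [Set.mem_ofPred_eq] at hz
      push Not at hz
      obtain ⟨i, hi⟩ := hz
      exact prod_eq_zero (mem_univ i) (ind_neg hi)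
  have h4 : 𝔼 z, (ind A z - (d + ζ)) * ∏ i, ind (Q i) (pt z i) ≤
      den {w : J → Option κ | ∀ j, w j ≠ none}
        - (d + ζ) * den {w : J → Option κ | ∀ i, pt w i ∈ Q i} := by
    rw [den, den, mul_expect, ← expect_sub_distrib]
    refine ex_mono fun z => ?_
    rw [h3]
    by_cases hz : z ∈ {w : J → Option κ | ∀ i, pt w i ∈ Q i}
    · rw [ind_pos hz]
      by_cases hzA : z ∈ A
      · have : z ∈ {w : J → Option κ | ∀ j, w j ≠ none} := hAD z hzA hz
        rw [ind_pos hzA, ind_pos this]; linarith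
      · rw [ind_neg hzA]; linarith [ind_nonneg {w : J → Option κ | ∀ j, w j ≠ none} z]
    · rw [ind_neg hz]; linarith [ind_nonneg {w : J → Option κ | ∀ j, w j ≠ none} z]
  have h5 : (2 : ℝ) ^ Fintype.card κ * (ζ / 2 ^ Fintype.card κ) = ζ := by field_simp
  rw [h2, h5] at h1
  have h6 : d * (θ / 2) ≤ (d + ζ) * den {w : J → Option κ | ∀ i, pt w i ∈ Q i} := by
    gcongr; linarith
  nlinarith

set_option maxHeartbeats 2000000 in
lemma stepX {κ : Type} [Fintype κ] [Nonempty κ] (h : DHJ κ) : DHJ (Option κ) := by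
  classical
  by_contra hcon
  obtain ⟨d, hd, hd1, hU, hL⟩ := extremal hcon
  obtain ⟨M0, hM0⟩ := h (d / 4) (by positivity)
  set K : ℝ := ((Fintype.card (Fin M0 → Option κ) : ℕ) : ℝ) with hK
  have hK1 : 1 ≤ K := by
    have : 1 ≤ Fintype.card (Fin M0 → Option κ) := Fintype.card_pos
    rw [hK]; exact_mod_cast this
  set θ := d / 4 / K with hθ
  have hθ0 : 0 < θ := by positivity
  have hθd : θ ≤ d / 4 := div_le_self (by positivity) hK1
  set ζ := d * θ / 32 with hζ
  have hζ0 : 0 < ζ := by positivity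
  have hζ1 : ζ ≤ 1 := by nlinarith
  set ε1 := θ * ζ / 8 with hε1
  have hε10 : 0 < ε1 := by positivity
  have hε11 : ε1 ≤ 1 := by nlinarith
  obtain ⟨m2, hm2⟩ := hU ζ hζ0
  obtain ⟨m3, hm3⟩ := insC h univ m2 (ζ / 2 ^ Fintype.card κ) (by positivity)
  obtain ⟨m4, hm4⟩ := exists_pow_lt_of_lt_one (x := ζ)
    (y := (Fintype.card κ : ℝ) / (Fintype.card κ + 1)) hζ0 (by
      rw [div_lt_one (by positivity)]; linarith)
  obtain ⟨m5, hm5⟩ := hU ε1 hε10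
  -- mixing needs `e0`; use a uniform bound over all `e0`
  have hτinj : ∀ e0 : Fin M0, Function.Injective
      (fun o : Option κ => (o.elim (Sum.inl e0) Sum.inr : Fin M0 ⊕ κ)) := by
    intro e0 a b hab
    cases a <;> cases b <;> simp_all
  have hmix := fun e0 : Fin M0 => mix _ (hτinj e0) (max m3 (max m4 m5)) (ε := θ / 4)
    (by positivity) (1 + 1 / ζ * 3) (by positivity)
  choose nmix hmix using hmix
  set n := univ.sup nmix with hn
  have hnle : ∀ e0, nmix e0 ≤ Fintype.card (Fin n) := by
    intro e0; rw [Fintype.card_fin]; exact le_sup (f := nmix) (mem_univ e0)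
  obtain ⟨c, A, hALF, hAd⟩ := claimX hU hL n hε10
  -- the colour
  have hcol : ∃ ℓ : Fin M0 → Option κ, (∃ i, ℓ i = none) ∧
      θ ≤ den {p : (Fin c → Option κ) × (Fin n → Fin M0 ⊕ κ) |
        ∀ a, (fun j => some (pt (fun j => Sum.elim ℓ some (p.2 j)) a j)) ∈ A p.1} := by
    set B : (Fin c → Option κ) × (Fin n → Fin M0 ⊕ κ) → Set (Fin M0 → κ) := fun p =>
      {x | (fun j => some (Sum.elim x id (p.2 j))) ∈ A p.1} with hB
    have hav : d - ε1 ≤ 𝔼 p, den (B p) := by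
      simp only [den]
      rw [ex_prod, ex_comm]
      have : ∀ s : Fin n → Fin M0 ⊕ κ, d - ε1 ≤ 𝔼 y, 𝔼 x, ind (B (y, s)) x := by
        intro s
        rw [ex_comm]
        refine le_expect univ_nonempty fun x _ => ?_
        exact hAd (fun j => some (Sum.elim x id (s j)))
      exact le_expect univ_nonempty fun s _ => this s
    have hfr := exists_frac (f := fun p => den (B p)) (fun p => den_le_one _) (c := d / 4)
      (by positivity)
    have h3 : d / 4 ≤ den {p | d / 4 ≤ den (B p)} := by
      have : ε1 ≤ d / 4 := by nlinarith
      linarith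
    obtain ⟨ℓ, hℓ⟩ := exists_color (C := Fin M0 → Option κ) h3 (by positivity)
      (fun ℓ => {p | (∃ i, ℓ i = none) ∧ ∀ a, pt ℓ a ∈ B p}) (by
        intro p hp
        have := hM0 (Fin M0) (by simp) (B p) hp
        simp only [LF] at this
        push Not at this
        obtain ⟨L, h1, h2⟩ := this
        exact ⟨L, h1, h2⟩)
    refine ⟨ℓ, ?_, ?_⟩
    · by_contra hne
      have : den {p | (∃ i, ℓ i = none) ∧ ∀ a, pt ℓ a ∈ B p} = 0 := by
        refine expect_eq_zero fun p _ => ind_neg ?_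
        exact fun h => hne h.1
      rw [this] at hℓ
      exact absurd hℓ (not_le.2 (by positivity))
    · refine hℓ.trans (den_mono ?_)
      intro p hp a
      have h2 : (fun j => some (Sum.elim (pt ℓ a) id (p.2 j))) ∈ A p.1 := hp.2 a
      convert h2 using 2 with j
      simp only [pt]
      cases p.2 j <;> simp [pt]
  obtain ⟨ℓ, ⟨e0, he0⟩, hθℓ⟩ := hcol
  set ℓ' : Fin M0 ⊕ κ → Option κ := Sum.elim ℓ some with hℓ'
  set Dz : (Fin c → Option κ) → Set (Fin n → Option κ) := fun y =>
    {z | ∀ a, (fun j => some (pt z a j)) ∈ A y} with hDz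
  set Φ : (Fin c → Option κ) → (Fin n → Fin M0 ⊕ κ) → ℝ := fun y s =>
    ind (Dz y) (ℓ' ∘ s) + 1 / ζ * (ind (A y) (ℓ' ∘ s) - d - ε1) with hΦ
  have hΦavg : 3 * θ / 4 ≤ 𝔼 y, 𝔼 s, Φ y s := by
    have h1 : θ ≤ 𝔼 y, 𝔼 s, ind (Dz y) (ℓ' ∘ s) := by
      rw [den, ex_prod] at hθℓ
      exact hθℓ
    have h2 : d - ε1 ≤ 𝔼 y, 𝔼 s, ind (A y) (ℓ' ∘ s) := by
      rw [ex_comm]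
      exact le_expect univ_nonempty fun s _ => hAd _
    have h3 : 𝔼 y, 𝔼 s, Φ y s = 𝔼 y, 𝔼 s, ind (Dz y) (ℓ' ∘ s) +
        1 / ζ * (𝔼 y, 𝔼 s, ind (A y) (ℓ' ∘ s) - d - ε1) := by
      simp only [hΦ, expect_add_distrib, ← mul_expect, expect_sub_distrib, Fintype.expect_const]
    have h4 : 1 / ζ * (-ε1 - ε1) = - θ / 4 := by
      rw [hε1]; field_simp; ring
    have h5 : 1 / ζ * (-ε1 - ε1) ≤ 1 / ζ * (𝔼 y, 𝔼 s, ind (A y) (ℓ' ∘ s) - d - ε1) := by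
      gcongr; linarith
    rw [h3]; linarith
  obtain ⟨y, hy⟩ := exists_ge_ex hΦavg
  obtain ⟨s, hsJ, hsavg⟩ := hmix e0 (Fin n) (hnle e0) (Φ y) (by
    intro s
    have h1 := ind_nonneg (Dz y) (ℓ' ∘ s)
    have h2 := ind_le_one (Dz y) (ℓ' ∘ s)
    have h3 := ind_nonneg (A y) (ℓ' ∘ s)
    have h4 := ind_le_one (A y) (ℓ' ∘ s)
    have h5 : |ind (A y) (ℓ' ∘ s) - d - ε1| ≤ 3 := abs_le.2 ⟨by linarith, by linarith⟩
    calc |Φ y s| ≤ |ind (Dz y) (ℓ' ∘ s)| + |1 / ζ * (ind (A y) (ℓ' ∘ s) - d - ε1)| := abs_add_le _ _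
      _ ≤ 1 + 1 / ζ * 3 := by
        rw [abs_mul, abs_of_pos (show 0 < 1 / ζ by positivity), abs_of_nonneg h1]
        gcongr)
  set τ : Option κ → Fin M0 ⊕ κ := fun o => o.elim (Sum.inl e0) Sum.inr with hτ
  have hℓτ : ∀ o, ℓ' (τ o) = o := by
    intro o; cases o <;> simp [hℓ', hτ, he0]
  set J := {j // s j ∈ Set.range τ} with hJ
  set φ : Fin n → Option κ ⊕ J := fun j => if hj : s j ∈ Set.range τ then Sum.inr ⟨j, hj⟩
    else Sum.inl (ℓ' (s j)) with hφ
  have hφp : Proper φ := by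
    rintro ⟨j, hj⟩
    exact ⟨j, by simp only [hφ]; rw [dif_pos hj]⟩
  have hstar : ∀ b : Fin n → Option κ, ℓ' ∘ star τ s b = ev φ (fun j : J => b j) := by
    intro b
    funext j
    simp only [Function.comp, star, ev, hφ]
    split_ifs with hj
    · simp [hℓτ]
    · simp
  set A' : Set (J → Option κ) := ev φ ⁻¹' A y with hA'
  have hA'LF : LF A' := (hALF y).pre hφp
  set D' : Set (J → Option κ) := ev φ ⁻¹' Dz y with hD'
  rw [Nat.card_eq_fintype_card] at hsJ
  have hav2 : 𝔼 b : Fin n → Option κ, Φ y (star τ s b) = den D' + 1 / ζ * (den A' - d - ε1) := by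
    have : ∀ b : Fin n → Option κ, Φ y (star τ s b) =
        (fun w : J → Option κ => ind D' w + 1 / ζ * (ind A' w - d - ε1)) (fun j : J => b j) := by
      intro b
      simp only [hΦ, hstar]
      rfl
    simp only [this]
    rw [ex_restrict (fun j => s j ∈ Set.range τ)
      (fun w : J → Option κ => ind D' w + 1 / ζ * (ind A' w - d - ε1))]
    exact lin_ex D' A' (1 / ζ) d ε1
  rw [hav2] at hsavg
  have hlow : θ / 2 ≤ den D' + 1 / ζ * (den A' - d - ε1) := by linarith
  have hA'u : den A' < d + ε1 := hm5 J (by omega) A' hA'LF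
  have hD'l : θ / 2 ≤ den D' := by
    have : 1 / ζ * (den A' - d - ε1) ≤ 0 :=
      mul_nonpos_of_nonneg_of_nonpos (by positivity) (by linarith)
    linarith
  have hA'l : d - ζ ≤ den A' := by
    have h1 : -1 ≤ 1 / ζ * (den A' - d - ε1) := by linarith [den_le_one D']
    have h2 := mul_le_mul_of_nonneg_left h1 hζ0.le
    rw [← mul_assoc, mul_one_div_cancel hζ0.ne'] at h2
    linarith
  set Q : κ → Set (J → κ) := fun a =>
    {x | (fun j => some (Sum.elim (fun o : Option κ => o.getD a) x (φ j))) ∈ A y} with hQ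
  have hptev : ∀ (w : J → Option κ) a, pt (ev φ w) a =
      fun j => Sum.elim (fun o : Option κ => o.getD a) (pt w a) (φ j) := by
    intro w a; funext i; simp only [pt, ev]; cases φ i <;> simp [pt]
  have hD'Q : D' = {w | ∀ i, pt w i ∈ Q i} := by
    ext w
    constructor
    · intro hw i
      have := hw i
      rw [hptev] at this
      exact this
    · intro hw i
      have := hw i
      rw [hptev]
      exact this
  refine terminal hd hθ0 hζ A' Q ?_ hA'l (hD'Q ▸ hD'l) ?_ ?_
  · intro Q
    refine hm3 J (by omega) (fun z => ind A' z - (d + ζ)) (fun z => ?_) (fun ψ hψ => ?_) Q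
    · linarith [ind_le_one A' z]
    · have h1 := hm2 (Fin m2) (by simp) _ (hA'LF.pre hψ)
      rw [expect_sub_distrib, Fintype.expect_const]
      have h2 : 𝔼 w, ind A' (ev ψ w) = den (ev ψ ⁻¹' A') := rfl
      linarith
  · intro w hwA hwQ j hj
    have hwD : w ∈ D' := by rw [hD'Q]; exact hwQ
    refine hALF y (fun i => (ev φ w i).map some) ?_ ?_
    · obtain ⟨i, hi⟩ := hφp j
      exact ⟨i, by simp [ev, hi, hj]⟩
    · intro o
      cases o with
      | none =>
        have h1 : ev φ w ∈ A y := hwA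
        convert h1 using 1
        funext i
        simp only [pt]
        cases ev φ w i <;> simp
      | some a =>
        have h1 := hwD a
        convert h1 using 1
        funext i
        simp only [pt]
        cases ev φ w i <;> simp
  · rw [nonone]
    refine le_trans ?_ hm4.le
    refine pow_le_pow_of_le_one (by positivity) ?_ (by omega)
    rw [div_le_one (by positivity)]; linarith

end SzRD

namespace SzRD
open Finset
open scoped BigOperators

lemma DHJ.equiv {κ κ' : Type} [Fintype κ] [Fintype κ'] (e : κ ≃ κ') (h : DHJ κ) : DHJ κ' := by
  intro δ hδ
  obtain ⟨n, hn⟩ := h δ hδ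
  refine ⟨n, fun ι _ _ hι A hA hLF => ?_⟩
  refine hn ι hι {x | e ∘ x ∈ A} ?_ ?_
  · refine hA.trans (le_of_eq ?_)
    refine (Fintype.expect_equiv (Equiv.arrowCongr (Equiv.refl ι) e) _ _ fun x => ?_).symm
    exact ind_congr Iff.rfl
  · intro L hL hmem
    refine hLF (fun i => (L i).map e) ?_ ?_
    · obtain ⟨i, hi⟩ := hL
      exact ⟨i, by simp [hi]⟩
    · intro a
      have := hmem (e.symm a)
      rw [Set.mem_ofPred_eq] at this
      convert this using 1
      funext i
      simp only [pt, Function.comp]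
      cases L i <;> simp

lemma dhj_one : DHJ (Fin 1) := by
  intro δ hδ
  refine ⟨1, fun ι _ _ hι A hA hLF => ?_⟩
  have : ∃ x, x ∈ A := by
    by_contra hne
    push Not at hne
    have : den A = 0 := expect_eq_zero fun x _ => ind_neg (hne x)
    linarith
  obtain ⟨x, hx⟩ := this
  have : Nonempty ι := Fintype.card_pos_iff.1 hι
  refine hLF (fun _ => none) ⟨Classical.arbitrary ι, rfl⟩ fun a => ?_
  rwa [Subsingleton.elim (pt (fun _ => none) a) x]

theorem dhj_fin (q : ℕ) : DHJ (Fin (q + 1)) := by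
  induction q with
  | zero => exact dhj_one
  | succ q ih => exact (stepX ih).equiv (finSuccEquiv (q + 1)).symm

lemma ex_hom {H G : Type*} [AddCommGroup H] [AddCommGroup G] [Fintype H] [Fintype G]
    (Ψ : H →+ G) (hΨ : Function.Surjective Ψ) (F : G → ℝ) : 𝔼 p, F (Ψ p) = 𝔼 g, F g := by
  choose r hr using hΨ
  calc 𝔼 p, F (Ψ p) = 𝔼 _g : G, 𝔼 p, F (Ψ p) := (Fintype.expect_const _).symm
    _ = 𝔼 g : G, 𝔼 p, F (Ψ (p + r g)) := by
      refine expect_congr rfl fun g _ => ?_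
      exact (Fintype.expect_equiv (Equiv.addRight (r g)) _ _ fun p => rfl).symm
    _ = 𝔼 p : H, 𝔼 g : G, F (Ψ p + g) := by
      rw [ex_comm]; simp only [map_add, hr]
    _ = 𝔼 _p : H, 𝔼 g : G, F g := by
      refine expect_congr rfl fun p _ => ?_
      exact Fintype.expect_equiv (Equiv.addLeft (Ψ p)) _ _ fun p => rfl
    _ = _ := Fintype.expect_const _

theorem varnavides (q : ℕ) (α : ℝ) (hα : 0 < α) : ∃ c : ℝ, 0 < c ∧ ∀ (N : ℕ) [NeZero N]
    (A : Finset (ZMod N)), α * N ≤ #A →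
    c ≤ den {p : ZMod N × ZMod N | ∀ j : ℕ, j < q + 1 → p.1 + (j : ZMod N) * p.2 ∈ A} := by
  classical
  obtain ⟨n, hn⟩ := dhj_fin q (α / 2) (by positivity)
  refine ⟨α / 2 / ((Fintype.card (Fin n → Option (Fin (q + 1))) : ℕ) : ℝ), ?_, ?_⟩
  · have : 0 < Fintype.card (Fin n → Option (Fin (q + 1))) := Fintype.card_pos
    positivity
  intro N _ A hA
  set B : ZMod N × (Fin n → ZMod N) → Set (Fin n → Fin (q + 1)) := fun p =>
    {x | p.1 + ∑ i, ((x i : ℕ) : ZMod N) * p.2 i ∈ A} with hB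
  have hN : (0 : ℝ) < N := by exact_mod_cast Nat.pos_of_ne_zero (NeZero.ne N)
  have hav : α ≤ 𝔼 p, den (B p) := by
    simp only [den]
    rw [ex_comm]
    refine le_expect univ_nonempty fun x _ => ?_
    rw [ex_prod, ex_comm]
    refine le_expect univ_nonempty fun d _ => ?_
    have : 𝔼 a, ind (B (a, d)) x = 𝔼 a, ind {a | a ∈ A} a := by
      refine Fintype.expect_equiv (Equiv.addRight (∑ i, ((x i : ℕ) : ZMod N) * d i)) _ _ fun a => ?_
      exact ind_congr Iff.rfl
    rw [this, Fintype.expect_eq_sum_div_card, ZMod.card, le_div_iff₀ hN]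
    refine hA.trans (le_of_eq ?_)
    simp [ind]
  have hfr := exists_frac (f := fun p => den (B p)) (fun p => den_le_one _) (c := α / 2)
    (by positivity)
  have h3 : α / 2 ≤ den {p | α / 2 ≤ den (B p)} := by linarith
  obtain ⟨L, hL⟩ := exists_color (C := Fin n → Option (Fin (q + 1))) h3 (by positivity)
    (fun ℓ => {p | (∃ i, ℓ i = none) ∧ ∀ a, pt ℓ a ∈ B p}) (by
      intro p hp
      have := hn (Fin n) (by simp) (B p) hp
      simp only [LF] at this
      push Not at this
      obtain ⟨L, h1, h2⟩ := this
      exact ⟨L, h1, h2⟩)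
  have hnone : ∃ i, L i = none := by
    by_contra hne
    have : den {p | (∃ i, L i = none) ∧ ∀ a, pt L a ∈ B p} = 0 := by
      refine expect_eq_zero fun p _ => ind_neg ?_
      exact fun h => hne h.1
    rw [this] at hL
    refine absurd hL (not_le.2 ?_)
    have : 0 < Fintype.card (Fin n → Option (Fin (q + 1))) := Fintype.card_pos
    positivity
  obtain ⟨i0, hi0⟩ := hnone
  refine hL.trans ?_
  let Ψ : ZMod N × (Fin n → ZMod N) →+ ZMod N × ZMod N :=
    { toFun := fun p => (p.1 + ∑ i, ((L i).elim 0 (fun a => ((a : ℕ) : ZMod N))) * p.2 i,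
        ∑ i, (if L i = none then 1 else 0) * p.2 i)
      map_zero' := by simp
      map_add' := by
        intro p r
        ext
        · simp only [Prod.fst_add, Prod.snd_add, Pi.add_apply, mul_add, sum_add_distrib]; ring
        · simp only [Prod.snd_add, Pi.add_apply, mul_add, sum_add_distrib] }
  have hΨ : Function.Surjective Ψ := by
    rintro ⟨a, d⟩
    refine ⟨(a, Pi.single i0 d), ?_⟩
    ext
    · change a + ∑ i, ((L i).elim 0 (fun a => ((a : ℕ) : ZMod N))) * (Pi.single i0 d : Fin n → ZMod N) i = a
      rw [Fintype.sum_eq_single i0]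
      · simp [hi0]
      · intro i hi; simp [hi]
    · change ∑ i, (if L i = none then 1 else 0) * (Pi.single i0 d : Fin n → ZMod N) i = d
      rw [Fintype.sum_eq_single i0]
      · simp [hi0]
      · intro i hi; simp [hi]
  rw [den, den, ← ex_hom Ψ hΨ]
  refine ex_mono fun p => ?_
  by_cases hp : p ∈ {p | (∃ i, L i = none) ∧ ∀ a, pt L a ∈ B p}
  · have : Ψ p ∈ {p : ZMod N × ZMod N | ∀ j : ℕ, j < q + 1 → p.1 + (j : ZMod N) * p.2 ∈ A} := by
      intro j hj
      have h1 : p.1 + ∑ i, (((pt L ⟨j, hj⟩ i : Fin (q + 1)) : ℕ) : ZMod N) * p.2 i ∈ A := hp.2 ⟨j, hj⟩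
      convert h1 using 1
      change p.1 + ∑ i, ((L i).elim 0 (fun a => ((a : ℕ) : ZMod N))) * p.2 i
        + j * ∑ i, (if L i = none then 1 else 0) * p.2 i = _
      rw [add_assoc, mul_sum, ← sum_add_distrib]
      congr 1
      refine sum_congr rfl fun i _ => ?_
      simp only [pt]
      cases L i <;> simp
    rw [ind_pos hp, ind_pos this]
  · rw [ind_neg hp]; exact ind_nonneg _ _

end SzRD

namespace SzRD
open Finset
open scoped BigOperators
open Matrix

noncomputable def qf {X : Type*} [Fintype X] (S : Matrix X X ℝ) (v : X → ℝ) : ℝ :=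
  ∑ x, ∑ y, v x * S x y * v y

noncomputable def nsq {X : Type*} [Fintype X] (v : X → ℝ) : ℝ := ∑ x, v x ^ 2

lemma nsq_nonneg {X : Type*} [Fintype X] (v : X → ℝ) : 0 ≤ nsq v := sum_nonneg fun _ _ => sq_nonneg _

lemma qf_sq {X : Type*} [Fintype X] (T : Matrix X X ℝ) (hT : Tᵀ = T) (v : X → ℝ) :
    qf (T * T) v = ∑ x, (∑ y, T x y * v y) ^ 2 := by
  have hs : ∀ x y, T x y = T y x := fun x y => by
    conv_lhs => rw [← hT]
    rfl
  simp only [qf, Matrix.mul_apply, sq, sum_mul_sum, mul_sum, sum_mul]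
  have : ∀ x y z, v x * (T x z * T z y) * v y = T z x * v x * (T z y * v y) := by
    intro x y z; rw [hs x z]; ring
  simp only [this]
  rw [sum_comm' (t' := univ) (s' := fun _ => univ) (by simp)]
  rw [sum_comm]
  conv_rhs => rw [sum_comm]
  conv_lhs => rw [sum_comm]
  refine sum_congr rfl fun x _ => ?_
  rw [sum_comm]

lemma qf_step {X : Type*} [Fintype X] (T : Matrix X X ℝ) (hT : Tᵀ = T) (v : X → ℝ) :
    qf T v ^ 2 ≤ nsq v * qf (T * T) v := by
  rw [qf_sq T hT]
  have : qf T v = ∑ x, v x * ∑ y, T x y * v y := by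
    simp only [qf, mul_sum]
    exact sum_congr rfl fun x _ => sum_congr rfl fun y _ => by ring
  rw [this]
  exact sum_mul_sq_le_sq_mul_sq _ _ _

lemma qf_trace {X : Type*} [Fintype X] (T : Matrix X X ℝ) (hT : Tᵀ = T) (v : X → ℝ) :
    qf (T * T) v ≤ nsq v * (T * T).trace := by
  rw [qf_sq T hT]
  have hs : ∀ x y, T x y = T y x := fun x y => by
    conv_lhs => rw [← hT]
    rfl
  have h1 : (T * T).trace = ∑ x, ∑ y, T x y ^ 2 := by
    simp only [Matrix.trace, Matrix.diag, Matrix.mul_apply]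
    refine sum_congr rfl fun x _ => sum_congr rfl fun y _ => ?_
    rw [hs y x]; ring
  rw [h1, mul_sum]
  refine sum_le_sum fun x _ => ?_
  rw [mul_comm]
  exact sum_mul_sq_le_sq_mul_sq _ _ _

lemma qf_pow {X : Type*} [Fintype X] [DecidableEq X] (v : X → ℝ) (j : ℕ) :
    ∀ (S : Matrix X X ℝ), Sᵀ = S →
    qf S v ^ 2 ^ (j + 1) ≤ nsq v ^ 2 ^ (j + 1) * (S ^ 2 ^ (j + 1)).trace := by
  induction j with
  | zero =>
    intro S hS
    have h1 := qf_step S hS v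
    have h2 := qf_trace S hS v
    have h3 := mul_le_mul_of_nonneg_left h2 (nsq_nonneg v)
    simp only [zero_add, pow_one, sq] at *
    nlinarith
  | succ j ih =>
    intro S hS
    have hS2 : (S * S)ᵀ = S * S := by rw [Matrix.transpose_mul, hS]
    have h1 := ih (S * S) hS2
    calc qf S v ^ 2 ^ (j + 1 + 1) = (qf S v ^ 2) ^ 2 ^ (j + 1) := by rw [← pow_mul, pow_succ' 2 (j + 1)]
      _ ≤ (nsq v * qf (S * S) v) ^ 2 ^ (j + 1) := by
        gcongr
        exact qf_step S hS v
      _ = nsq v ^ 2 ^ (j + 1) * qf (S * S) v ^ 2 ^ (j + 1) := by rw [mul_pow]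
      _ ≤ nsq v ^ 2 ^ (j + 1) * (nsq v ^ 2 ^ (j + 1) * ((S * S) ^ 2 ^ (j + 1)).trace) := by
        gcongr
        exact pow_nonneg (nsq_nonneg v) _
      _ = _ := by
        rw [← sq S, ← pow_mul, pow_succ' 2 (j + 1), ← mul_assoc, ← pow_add, two_mul]

/-- signs -/
def sg (b : Bool) : ℝ := if b then 1 else -1

lemma sum_pi_prod {ι E : Type*} [Fintype ι] [DecidableEq ι] [Fintype E] (g : ι → E → ℝ) :
    ∑ s : ι → E, ∏ i, g i (s i) = ∏ i, ∑ e, g i e := by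
  have := Finset.prod_univ_sum (fun _ : ι => (univ : Finset E)) g
  simp only [Fintype.piFinset_univ] at this
  exact this.symm

noncomputable def mon {m : ℕ} (a : Fin m → ℕ) (ε : Fin m → Bool) : ℝ := ∏ i, sg (ε i) ^ a i

lemma mon_nonneg {m : ℕ} (a : Fin m → ℕ) : 0 ≤ 𝔼 ε, mon a ε := by
  rw [Fintype.expect_eq_sum_div_card]
  refine div_nonneg ?_ (by positivity)
  simp only [mon]
  rw [sum_pi_prod (fun i b => sg b ^ a i)]
  refine prod_nonneg fun i _ => ?_
  rw [Fintype.sum_bool]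
  simp only [sg, if_true, Bool.false_eq_true, if_false, one_pow]
  rcases neg_one_pow_eq_or ℝ (a i) with h | h <;> rw [h] <;> norm_num

lemma mon_succ {m : ℕ} (a : Fin m → ℕ) (i : Fin m) (ε : Fin m → Bool) :
    mon (a + Pi.single i 1) ε = mon a ε * sg (ε i) := by
  simp only [mon, Pi.add_apply, pow_add, prod_mul_distrib]
  congr 1
  rw [Fintype.prod_eq_single i]
  · simp
  · intro j hj; simp [hj]

lemma rad_bound {X : Type*} [Fintype X] [DecidableEq X] {m : ℕ} (T : Fin m → Matrix X X ℝ) {ρ : ℝ}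
    (hρ : 0 ≤ ρ) (hT : ∀ i x, ∑ y, |T i x y| ≤ ρ) (n : ℕ) : ∀ (a : Fin m → ℕ) (x : X),
    ∑ y, |𝔼 ε : Fin m → Bool, mon a ε * ((∑ i, sg (ε i) • T i) ^ n) x y| ≤
      ρ ^ n * 𝔼 ε : Fin m → Bool, mon a ε * (∑ i, sg (ε i)) ^ n := by
  induction n with
  | zero =>
    intro a x
    simp only [pow_zero, mul_one, one_mul]
    rw [Fintype.sum_eq_single x]
    · simp only [Matrix.one_apply_eq, mul_one]
      rw [abs_of_nonneg (mon_nonneg a)]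
    · intro y hy
      simp [Matrix.one_apply_ne hy.symm]
  | succ n ih =>
    intro a x
    have hnn : ∀ i, 0 ≤ ρ ^ n * 𝔼 ε : Fin m → Bool, mon (a + Pi.single i 1) ε * (∑ i, sg (ε i)) ^ n :=
      fun i => le_trans (sum_nonneg fun _ _ => abs_nonneg _) (ih (a + Pi.single i 1) x)
    have e1 : ∀ y, 𝔼 ε : Fin m → Bool, mon a ε * ((∑ i, sg (ε i) • T i) ^ (n + 1)) x y =
        ∑ i, ∑ z, T i x z * 𝔼 ε : Fin m → Bool,
          mon (a + Pi.single i 1) ε * ((∑ i, sg (ε i) • T i) ^ n) z y := by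
      intro y
      simp only [mul_expect]
      simp only [← Finset.expect_sum_comm]
      refine expect_congr rfl fun ε _ => ?_
      rw [pow_succ', Matrix.mul_apply]
      simp only [Matrix.sum_apply, Matrix.smul_apply, sum_mul, mul_sum, smul_eq_mul]
      rw [sum_comm]
      refine sum_congr rfl fun i _ => sum_congr rfl fun z _ => ?_
      rw [mon_succ]; ring
    calc ∑ y, |𝔼 ε : Fin m → Bool, mon a ε * ((∑ i, sg (ε i) • T i) ^ (n + 1)) x y|
        ≤ ∑ y, ∑ i, ∑ z, |T i x z| * |𝔼 ε : Fin m → Bool,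
          mon (a + Pi.single i 1) ε * ((∑ i, sg (ε i) • T i) ^ n) z y| := by
          refine sum_le_sum fun y _ => ?_
          rw [e1]
          refine (abs_sum_le_sum_abs _ _).trans (sum_le_sum fun i _ => ?_)
          refine (abs_sum_le_sum_abs _ _).trans (sum_le_sum fun z _ => ?_)
          rw [abs_mul]
      _ = ∑ i, ∑ z, |T i x z| * ∑ y, |𝔼 ε : Fin m → Bool,
          mon (a + Pi.single i 1) ε * ((∑ i, sg (ε i) • T i) ^ n) z y| := by
          rw [sum_comm]
          refine sum_congr rfl fun i _ => ?_
          rw [sum_comm]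
          refine sum_congr rfl fun z _ => ?_
          rw [mul_sum]
      _ ≤ ∑ i, ∑ z, |T i x z| * (ρ ^ n * 𝔼 ε : Fin m → Bool, mon (a + Pi.single i 1) ε * (∑ i, sg (ε i)) ^ n) := by
          refine sum_le_sum fun i _ => sum_le_sum fun z _ => ?_
          gcongr
          exact ih _ _
      _ ≤ ∑ i, ρ * (ρ ^ n * 𝔼 ε : Fin m → Bool, mon (a + Pi.single i 1) ε * (∑ i, sg (ε i)) ^ n) := by
          refine sum_le_sum fun i _ => ?_
          rw [← sum_mul]
          exact mul_le_mul_of_nonneg_right (hT i x) (hnn i)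
      _ = _ := by
          rw [← mul_sum, ← mul_sum, ← mul_assoc, ← pow_succ', ← Finset.expect_sum_comm]
          congr 1
          refine expect_congr rfl fun ε _ => ?_
          rw [pow_succ', sum_mul, mul_sum]
          refine sum_congr rfl fun i _ => ?_
          rw [mon_succ]; ring

end SzRD

namespace SzRD
open Finset
open scoped BigOperators
open Matrix

lemma exp_moment (m : ℕ) (l : ℝ) :
    𝔼 ε : Fin m → Bool, Real.exp (l * ∑ i, sg (ε i)) ≤ Real.exp (l ^ 2 * m / 2) := by
  have h1 : ∀ ε : Fin m → Bool, Real.exp (l * ∑ i, sg (ε i)) = ∏ i, Real.exp (l * sg (ε i)) := by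
    intro ε; rw [mul_sum, Real.exp_sum]
  simp only [h1]
  rw [ex_pi_prod (fun b => Real.exp (l * sg b))]
  have h2 : 𝔼 b : Bool, Real.exp (l * sg b) = Real.cosh l := by
    rw [Fintype.expect_eq_sum_div_card, Fintype.sum_bool, Real.cosh_eq]
    simp [sg]
  rw [h2, Fintype.card_fin]
  calc Real.cosh l ^ m ≤ Real.exp (l ^ 2 / 2) ^ m := by
        refine pow_le_pow_left₀ (Real.cosh_pos l).le ?_ _
        exact Real.cosh_le_exp_half_sq l
    _ = _ := by rw [← Real.exp_nat_mul]; congr 1; ring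

lemma moment (m p : ℕ) (hm : 0 < m) (hp : 0 < p) :
    𝔼 ε : Fin m → Bool, (∑ i, sg (ε i)) ^ (2 * p) ≤ 2 * (2 * p * Real.exp 1 * m) ^ p := by
  have hm' : (0 : ℝ) < m := by exact_mod_cast hm
  have hp' : (0 : ℝ) < p := by exact_mod_cast hp
  set l := Real.sqrt (2 * p / m) with hl
  have hl2 : l ^ 2 = 2 * p / m := Real.sq_sqrt (by positivity)
  have key : ∀ x : ℝ, (2 * p / m : ℝ) ^ p * x ^ (2 * p) ≤
      (2 * p : ℝ) ^ (2 * p) * (Real.exp (l * x) + Real.exp (-l * x)) := by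
    intro x
    have h1 : (2 * p / m : ℝ) ^ p * x ^ (2 * p) = |l * x| ^ (2 * p) := by
      rw [← hl2, ← pow_mul, ← mul_pow, Even.pow_abs ⟨p, by ring⟩]
    have h2 := Real.pow_div_factorial_le_exp |l * x| (abs_nonneg _) (2 * p)
    rw [div_le_iff₀ (by positivity)] at h2
    have h3 : Real.exp |l * x| ≤ Real.exp (l * x) + Real.exp (-l * x) := by
      rcases abs_cases (l * x) with h | h <;> rw [h.1]
      · linarith [Real.exp_pos (-l * x)]
      · rw [neg_mul]; linarith [Real.exp_pos (l * x)]
    have h4 : ((2 * p).factorial : ℝ) ≤ (2 * p : ℝ) ^ (2 * p) := by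
      exact_mod_cast Nat.factorial_le_pow (2 * p)
    rw [h1]
    calc _ ≤ Real.exp |l * x| * (2 * p).factorial := h2
      _ ≤ (Real.exp (l * x) + Real.exp (-l * x)) * (2 * p : ℝ) ^ (2 * p) := by gcongr
      _ = _ := mul_comm _ _
  have h5 : (2 * p / m : ℝ) ^ p * 𝔼 ε : Fin m → Bool, (∑ i, sg (ε i)) ^ (2 * p) ≤
      (2 * p : ℝ) ^ (2 * p) * (Real.exp p + Real.exp p) := by
    rw [mul_expect]
    refine (ex_mono fun ε => key _).trans ?_
    rw [← mul_expect, expect_add_distrib]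
    have e1 := exp_moment m l
    have e2 := exp_moment m (-l)
    have e3 : l ^ 2 * m / 2 = p := by rw [hl2]; field_simp
    rw [neg_sq, e3] at e2
    rw [e3] at e1
    gcongr
  have h6 : (0:ℝ) < (2 * p / m : ℝ) ^ p := by positivity
  rw [← le_div_iff₀' h6] at h5
  refine h5.trans (le_of_eq ?_)
  have : Real.exp p = Real.exp 1 ^ p := by rw [← Real.exp_nat_mul, mul_one]
  have e1 : (2 * p * Real.exp 1 * m : ℝ) = (2 * p) ^ 2 * Real.exp 1 / (2 * p / m) := by
    field_simp
  rw [this, pow_mul, e1, div_pow ((2 * (p : ℝ)) ^ 2 * _), mul_pow ((2 * (p : ℝ)) ^ 2)]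
  generalize ((2 * (p : ℝ)) ^ 2) ^ p = a
  generalize (2 * (p : ℝ) / m) ^ p = b
  ring

lemma trace_pow_nonneg {X : Type*} [Fintype X] [DecidableEq X] (S : Matrix X X ℝ) (hS : Sᵀ = S)
    (j : ℕ) : 0 ≤ (S ^ 2 ^ (j + 1)).trace := by
  have hB : (S ^ 2 ^ j)ᵀ = S ^ 2 ^ j := by rw [Matrix.transpose_pow, hS]
  rw [pow_succ 2 j, mul_two, pow_add]
  set T := S ^ 2 ^ j
  have hs : ∀ x y, T x y = T y x := fun x y => by
    conv_lhs => rw [← hB]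
    rfl
  have h1 : (T * T).trace = ∑ x, ∑ y, T x y ^ 2 := by
    simp only [Matrix.trace, Matrix.diag, Matrix.mul_apply]
    refine sum_congr rfl fun x _ => sum_congr rfl fun y _ => ?_
    rw [hs y x]; ring
  rw [h1]
  exact sum_nonneg fun _ _ => sum_nonneg fun _ _ => sq_nonneg _

lemma qf_sum {X ι : Type*} [Fintype X] (s : Finset ι) (S : ι → Matrix X X ℝ) (v : X → ℝ) :
    qf (∑ i ∈ s, S i) v = ∑ i ∈ s, qf (S i) v := by
  classical
  simp only [qf, Matrix.sum_apply, mul_sum, sum_mul]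
  rw [sum_comm (s := s)]
  refine sum_congr rfl fun x _ => ?_
  rw [sum_comm (s := s)]

lemma qf_sub {X : Type*} [Fintype X] (S T : Matrix X X ℝ) (v : X → ℝ) :
    qf (S - T) v = qf S v - qf T v := by
  simp only [qf, Matrix.sub_apply, mul_sub, sub_mul, sum_sub_distrib]

lemma tail {G X : Type*} [AddCommGroup G] [Fintype G] [Fintype X] [DecidableEq X]
    (M : G → Matrix X X ℝ) (hM : ∀ g, (M g)ᵀ = M g) {r c : ℝ} (hr : 0 ≤ r)
    (hMr : ∀ g x, ∑ y, |M g x y| ≤ r) (hc : 0 < c) (m j : ℕ) (hm : 0 < m) :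
    den {u : Fin m → G | ∃ v : X → ℝ, 0 < nsq v ∧ (∀ i, qf (M (u i)) v = 0) ∧
      c * nsq v ≤ 𝔼 g, qf (M g) v} ≤
    2 * Fintype.card X * ((2 * r) ^ 2 * (2 * 2 ^ j * Real.exp 1) / (c ^ 2 * m)) ^ 2 ^ j := by
  classical
  set n := 2 ^ (j + 1) with hn
  have hn2 : n = 2 * 2 ^ j := by rw [hn, pow_succ']
  have hm' : (0 : ℝ) < m := by exact_mod_cast hm
  set S : (Fin m → G) → (Fin m → G) → Matrix X X ℝ := fun u u' => ∑ i, (M (u' i) - M (u i)) with hS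
  have hSs : ∀ u u', (S u u')ᵀ = S u u' := by
    intro u u'
    simp only [hS, Matrix.transpose_sum, Matrix.transpose_sub, hM]
  set Bad : Set (Fin m → G) := {u | ∃ v : X → ℝ, 0 < nsq v ∧ (∀ i, qf (M (u i)) v = 0) ∧
      c * nsq v ≤ 𝔼 g, qf (M g) v} with hBad
  have ha : ∀ u, (m * c) ^ n * ind Bad u ≤ 𝔼 u', (S u u' ^ n).trace := by
    intro u
    by_cases hu : u ∈ Bad
    · rw [ind_pos hu, mul_one]
      obtain ⟨v, hv, hz, hav⟩ := hu
      have h1 : 𝔼 u', qf (S u u') v = m * 𝔼 g, qf (M g) v := by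
        have : ∀ u', qf (S u u') v = ∑ i, qf (M (u' i)) v := by
          intro u'
          simp only [hS, qf_sum, qf_sub, hz, sub_zero]
        simp only [this]
        rw [Finset.expect_sum_comm]
        have h2 : ∀ i : Fin m, 𝔼 u' : Fin m → G, qf (M (u' i)) v = 𝔼 g, qf (M g) v := by
          intro i
          exact ex_hom (Pi.evalAddMonoidHom (fun _ : Fin m => G) i)
            (Function.surjective_eval i) (fun g => qf (M g) v)
        simp only [h2, sum_const, card_univ, Fintype.card_fin, nsmul_eq_mul]
      have h2 : (m * c * nsq v) ^ n ≤ (𝔼 u', qf (S u u') v) ^ n := by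
        rw [h1, mul_assoc]
        have := nsq_nonneg v
        gcongr
      have h3 : (𝔼 u', qf (S u u') v) ^ n ≤ 𝔼 u', qf (S u u') v ^ n := by
        have := Real.pow_arith_mean_le_arith_mean_pow_of_even univ
          (fun _ : Fin m → G => ((Fintype.card (Fin m → G) : ℝ))⁻¹) (fun u' => qf (S u u') v)
          (fun _ _ => by positivity) (by simp) (n := n) ⟨2 ^ j, by rw [hn2]; ring⟩
        rw [Fintype.expect_eq_sum_div_card, Fintype.expect_eq_sum_div_card]
        simp only [← mul_sum] at this
        rw [div_eq_inv_mul, div_eq_inv_mul]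
        exact this
      have h4 : 𝔼 u', qf (S u u') v ^ n ≤ nsq v ^ n * 𝔼 u', (S u u' ^ n).trace := by
        rw [mul_expect]
        exact ex_mono fun u' => qf_pow v j _ (hSs u u')
      have h5 := (h2.trans h3).trans h4
      rw [mul_pow, mul_comm] at h5
      exact le_of_mul_le_mul_left h5 (by positivity)
    · rw [ind_neg hu, mul_zero]
      exact expect_nonneg fun u' _ => trace_pow_nonneg _ (hSs u u') j
  set D : (Fin m → G × G) → Fin m → Matrix X X ℝ := fun w i => M (w i).2 - M (w i).1 with hD
  have hb : 𝔼 u, 𝔼 u', (S u u' ^ n).trace = 𝔼 w : Fin m → G × G, ((∑ i, D w i) ^ n).trace := by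
    rw [← ex_prod (fun p : (Fin m → G) × (Fin m → G) => (S p.1 p.2 ^ n).trace)]
    exact (Fintype.expect_equiv (Equiv.arrowProdEquivProdArrow (Fin m) (fun _ => G) (fun _ => G)) _ _
      fun w => rfl).symm
  have hcs : ∀ ε : Fin m → Bool, 𝔼 w : Fin m → G × G, ((∑ i, D w i) ^ n).trace =
      𝔼 w : Fin m → G × G, ((∑ i, sg (ε i) • D w i) ^ n).trace := by
    intro ε
    refine (Fintype.expect_equiv (Equiv.piCongrRight
      (fun i => if ε i then Equiv.refl (G × G) else Equiv.prodComm G G)) _ _ fun w => ?_).symm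
    congr 2
    refine sum_congr rfl fun i _ => ?_
    simp only [hD, Equiv.piCongrRight_apply, Pi.map_apply, sg]
    cases ε i <;> simp
  have hd : ∀ w : Fin m → G × G, 𝔼 ε : Fin m → Bool, ((∑ i, sg (ε i) • D w i) ^ n).trace ≤
      Fintype.card X * ((2 * r) ^ n * (2 * (2 * 2 ^ j * Real.exp 1 * m) ^ 2 ^ j)) := by
    intro w
    have hT : ∀ i x, ∑ y, |D w i x y| ≤ 2 * r := by
      intro i x
      calc ∑ y, |D w i x y| ≤ ∑ y, (|M (w i).2 x y| + |M (w i).1 x y|) :=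
            sum_le_sum fun y _ => abs_sub _ _
        _ ≤ r + r := by rw [sum_add_distrib]; exact add_le_add (hMr _ _) (hMr _ _)
        _ = _ := by ring
    have h1 := rad_bound (D w) (by positivity) hT n 0
    simp only [mon, Pi.zero_apply, pow_zero, prod_const_one, one_mul] at h1
    have h2 := moment m (2 ^ j) hm (by positivity)
    rw [← hn2] at h2
    push_cast at h2
    simp only [Matrix.trace, Matrix.diag]
    rw [Finset.expect_sum_comm, ← nsmul_eq_mul, ← card_univ]
    refine sum_le_card_nsmul _ _ _ fun x _ => ?_
    refine (le_abs_self _).trans ?_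
    refine (single_le_sum (f := fun y => |𝔼 ε : Fin m → Bool, ((∑ i, sg (ε i) • D w i) ^ n) x y|)
      (fun y _ => abs_nonneg _) (mem_univ x)).trans ((h1 x).trans ?_)
    gcongr
  have he : (m * c) ^ n * den Bad ≤
      Fintype.card X * ((2 * r) ^ n * (2 * (2 * 2 ^ j * Real.exp 1 * m) ^ 2 ^ j)) := by
    rw [den, mul_expect]
    refine (ex_mono ha).trans ?_
    rw [hb]
    calc 𝔼 w : Fin m → G × G, ((∑ i, D w i) ^ n).trace
        = 𝔼 _ε : Fin m → Bool, 𝔼 w : Fin m → G × G, ((∑ i, D w i) ^ n).trace :=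
          (Fintype.expect_const _).symm
      _ = 𝔼 w : Fin m → G × G, 𝔼 ε : Fin m → Bool, ((∑ i, sg (ε i) • D w i) ^ n).trace := by
          rw [ex_comm (fun (w : Fin m → G × G) (ε : Fin m → Bool) =>
            ((∑ i, sg (ε i) • D w i) ^ n).trace)]
          exact expect_congr rfl fun ε _ => hcs ε
      _ ≤ _ := expect_le univ_nonempty fun w _ => hd w
  rw [← le_div_iff₀' (by positivity)] at he
  refine he.trans (le_of_eq ?_)
  have e1 : ((2 * r) ^ 2 * (2 * 2 ^ j * Real.exp 1) / (c ^ 2 * m) : ℝ) =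
      (2 * r) ^ 2 * (2 * 2 ^ j * Real.exp 1 * m) / (m * c) ^ 2 := by
    field_simp
  rw [hn2, pow_mul, pow_mul, e1, div_pow ((2 * r) ^ 2 * _), mul_pow ((2 * r) ^ 2)]
  ring

end SzRD

namespace SzRD
open Finset
open scoped BigOperators
open Matrix

set_option linter.unusedSectionVars false
section kik
variable {G : Type} [Fintype G] [DecidableEq G] {t k : ℕ}

noncomputable def cc (b : G) (ξ : Fin t → G) : ℝ := ∑ l, if ξ l = b then 1 else 0

noncomputable def ww (b b' : G) (ξ υ : Fin t → G) : ℝ :=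
  ∑ l, if ξ l = b ∧ υ = Function.update ξ l b' then 1 else 0

noncomputable def uu (A : Finset G) (ξ : Fin t → G) : ℝ := ∏ i, if ξ i ∈ A then 1 else 0

lemma cc_nonneg (b : G) (ξ : Fin t → G) : 0 ≤ cc b ξ :=
  sum_nonneg fun _ _ => by split_ifs <;> norm_num

lemma ww_nonneg (b b' : G) (ξ υ : Fin t → G) : 0 ≤ ww b b' ξ υ :=
  sum_nonneg fun _ _ => by split_ifs <;> norm_num

lemma uu_nonneg (A : Finset G) (ξ : Fin t → G) : 0 ≤ uu A ξ :=
  prod_nonneg fun _ _ => by split_ifs <;> norm_num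

lemma uu_le_one (A : Finset G) (ξ : Fin t → G) : uu A ξ ≤ 1 :=
  prod_le_one (fun _ _ => by split_ifs <;> norm_num) fun _ _ => by split_ifs <;> norm_num

lemma uu_sq (A : Finset G) (ξ : Fin t → G) : uu A ξ ^ 2 = uu A ξ := by
  simp only [uu, ← prod_pow]
  refine prod_congr rfl fun i _ => ?_
  split_ifs <;> norm_num

lemma ww_row (b b' : G) (ξ : Fin t → G) : ∑ υ, ww b b' ξ υ = cc b ξ := by
  simp only [ww, cc]
  rw [sum_comm]
  refine sum_congr rfl fun l _ => ?_
  by_cases h : ξ l = b <;> simp [h]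

lemma ww_symm (b b' : G) (ξ υ : Fin t → G) : ww b b' ξ υ = ww b' b υ ξ := by
  have key : ∀ (b b' : G) (ξ υ : Fin t → G) (l), (ξ l = b ∧ υ = Function.update ξ l b') →
      (υ l = b' ∧ ξ = Function.update υ l b) := by
    rintro b b' ξ υ l ⟨rfl, rfl⟩
    simp
  simp only [ww]
  refine sum_congr rfl fun l _ => ?_
  by_cases h : ξ l = b ∧ υ = Function.update ξ l b'
  · rw [if_pos h, if_pos (key _ _ _ _ _ h)]
  · rw [if_neg h, if_neg (fun h' => h (key _ _ _ _ _ h'))]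

lemma sum_uu (A : Finset G) : ∑ ξ : Fin t → G, uu A ξ = (#A : ℝ) ^ t := by
  simp only [uu]
  rw [sum_pi_prod (fun _ b => if b ∈ A then (1:ℝ) else 0)]
  simp

lemma uu_one (A : Finset G) (hA : A.Nonempty) (l : Fin t) (b : G) :
    ∑ ξ : Fin t → G, uu A ξ * (if ξ l = b then 1 else 0) =
      (if b ∈ A then 1 else 0) * ((#A : ℝ) ^ t / #A) := by
  have hA' : (#A : ℝ) ≠ 0 := by exact_mod_cast hA.card_pos.ne'
  have h1 : ∀ ξ : Fin t → G, uu A ξ * (if ξ l = b then 1 else 0) =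
      ∏ i, ((if ξ i ∈ A then 1 else 0) * (if i = l then (if ξ i = b then 1 else 0) else 1) : ℝ) := by
    intro ξ
    rw [prod_mul_distrib, prod_ite_eq' univ l (fun i => (if ξ i = b then (1:ℝ) else 0))]
    simp [uu]
  simp only [h1]
  rw [sum_pi_prod (fun i e => ((if e ∈ A then 1 else 0) *
    (if i = l then (if e = b then 1 else 0) else 1) : ℝ)), ← mul_prod_erase univ _ (mem_univ l)]
  have h2 : ∀ i ∈ univ.erase l, ∑ e, ((if e ∈ A then 1 else 0) *
    (if i = l then (if e = b then 1 else 0) else 1) : ℝ) = #A := by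
    intro i hi
    simp [(mem_erase.1 hi).1]
  rw [prod_congr rfl h2]
  have ht : t = (t - 1) + 1 := by have := l.pos; omega
  have h3 : (#A : ℝ) ^ t / #A = (#A : ℝ) ^ (t - 1) := by
    rw [div_eq_iff hA', ← pow_succ, ← ht]
  simp [h3, ite_and]

lemma uu_two (A : Finset G) (hA : A.Nonempty) (l l' : Fin t) (hl : l ≠ l') (b b' : G) :
    ∑ ξ : Fin t → G, uu A ξ * (if ξ l = b then 1 else 0) * (if ξ l' = b' then 1 else 0) ≤
      (#A : ℝ) ^ t / #A ^ 2 := by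
  have hA' : (#A : ℝ) ≠ 0 := by exact_mod_cast hA.card_pos.ne'
  have h1 : ∀ ξ : Fin t → G, uu A ξ * (if ξ l = b then 1 else 0) * (if ξ l' = b' then 1 else 0) =
      ∏ i, ((if ξ i ∈ A then 1 else 0) * (if i = l then (if ξ i = b then 1 else 0) else 1)
        * (if i = l' then (if ξ i = b' then 1 else 0) else 1) : ℝ) := by
    intro ξ
    rw [prod_mul_distrib, prod_mul_distrib, prod_ite_eq' univ l (fun i => (if ξ i = b then (1:ℝ) else 0)),
      prod_ite_eq' univ l' (fun i => (if ξ i = b' then (1:ℝ) else 0))]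
    simp [uu]
  simp only [h1]
  rw [sum_pi_prod (fun i e => ((if e ∈ A then 1 else 0) *
    (if i = l then (if e = b then 1 else 0) else 1) *
    (if i = l' then (if e = b' then 1 else 0) else 1) : ℝ)), ← mul_prod_erase univ _ (mem_univ l),
    ← mul_prod_erase (univ.erase l) _ (mem_erase.2 ⟨hl.symm, mem_univ l'⟩)]
  have h2 : ∀ i ∈ (univ.erase l).erase l', ∑ e, ((if e ∈ A then 1 else 0) *
    (if i = l then (if e = b then 1 else 0) else 1) *
    (if i = l' then (if e = b' then 1 else 0) else 1) : ℝ) = #A := by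
    intro i hi
    simp [(mem_erase.1 hi).1, (mem_erase.1 (mem_erase.1 hi).2).1]
  rw [prod_congr rfl h2]
  have hc : #((univ.erase l).erase l') = t - 2 := by
    rw [card_erase_of_mem (mem_erase.2 ⟨hl.symm, mem_univ l'⟩), card_erase_of_mem (mem_univ l)]
    simp; omega
  have ht : t = (t - 2) + 2 := by
    have h1 := l.isLt
    have h2 := l'.isLt
    have : (l : ℕ) ≠ l' := fun h => hl (Fin.ext h)
    omega
  have h3 : (#A : ℝ) ^ t / #A ^ 2 = (#A : ℝ) ^ (t - 2) := by
    rw [div_eq_iff (pow_ne_zero 2 hA'), ← pow_add, ← ht]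
  rw [h3, prod_const, hc]
  have h4 : ∑ e, ((if e ∈ A then 1 else 0) *
    (if l = l then (if e = b then 1 else 0) else 1) *
    (if l = l' then (if e = b' then 1 else 0) else 1) : ℝ) = if b ∈ A then 1 else 0 := by
    simp [hl]
  have h5 : ∑ e, ((if e ∈ A then 1 else 0) *
    (if l' = l then (if e = b then 1 else 0) else 1) *
    (if l' = l' then (if e = b' then 1 else 0) else 1) : ℝ) = if b' ∈ A then 1 else 0 := by
    simp [hl.symm]
  rw [h4, h5]
  have h6 : (0:ℝ) ≤ (#A : ℝ) ^ (t - 2) := pow_nonneg (Nat.cast_nonneg _) _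
  split_ifs <;> simp [h6]

lemma cc_two (A : Finset G) (hA : A.Nonempty) (b b' : G) :
    ∑ ξ : Fin t → G, uu A ξ * (cc b ξ * cc b' ξ) ≤
      (#A : ℝ) ^ t * ((t / #A) ^ 2 + (if b = b' then 1 else 0) * (t / #A)) := by
  have hA' : (0:ℝ) < (#A : ℝ) := by exact_mod_cast hA.card_pos
  have h1 : ∑ ξ : Fin t → G, uu A ξ * (cc b ξ * cc b' ξ) = ∑ l : Fin t, ∑ l' : Fin t,
      ∑ ξ : Fin t → G, uu A ξ * (if ξ l = b then 1 else 0) * (if ξ l' = b' then 1 else 0) := by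
    simp_rw [cc, sum_mul_sum, mul_sum]
    rw [sum_comm]
    refine sum_congr rfl fun l _ => ?_
    rw [sum_comm]
    refine sum_congr rfl fun l' _ => sum_congr rfl fun ξ _ => by ring
  have h2 : ∀ l l' : Fin t,
      ∑ ξ : Fin t → G, uu A ξ * (if ξ l = b then 1 else 0) * (if ξ l' = b' then 1 else 0) ≤
      (#A : ℝ) ^ t / #A ^ 2 + if l' = l then (if b = b' then 1 else 0) * ((#A : ℝ) ^ t / #A) else 0 := by
    intro l l'
    by_cases hl : l' = l
    · subst hl
      rw [if_pos rfl]
      have h3 : ∑ ξ : Fin t → G, uu A ξ * (if ξ l' = b then 1 else 0) * (if ξ l' = b' then 1 else 0)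
          ≤ (if b = b' then 1 else 0) * ((#A : ℝ) ^ t / #A) := by
        by_cases hb : b = b'
        · subst hb
          rw [if_pos rfl, one_mul]
          have h4 : ∀ ξ : Fin t → G, uu A ξ * (if ξ l' = b then 1 else 0) * (if ξ l' = b then 1 else 0) =
            uu A ξ * (if ξ l' = b then 1 else 0) := by
            intro ξ; split_ifs <;> simp
          simp only [h4]
          rw [uu_one A hA]
          have : 0 ≤ (#A : ℝ) ^ t / #A := by positivity
          split_ifs <;> simp [this]
        · rw [if_neg hb, zero_mul]
          refine le_of_eq (sum_eq_zero fun ξ _ => ?_)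
          split_ifs with h5 h6
          · exact absurd (h5.symm.trans h6) hb
          all_goals simp
      have : 0 ≤ (#A : ℝ) ^ t / #A ^ 2 := by positivity
      linarith
    · rw [if_neg hl, add_zero]
      exact uu_two A hA l l' (fun h => hl h.symm) b b'
  rw [h1]
  refine (sum_le_sum fun l _ => sum_le_sum fun l' _ => h2 l l').trans (le_of_eq ?_)
  simp only [sum_add_distrib, sum_ite_eq', mem_univ, if_true, sum_const, card_univ, Fintype.card_fin,
    nsmul_eq_mul]
  field_simp

lemma ww_form (A : Finset G) (hA : A.Nonempty) (b b' : G) :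
    ∑ ξ : Fin t → G, ∑ υ : Fin t → G, uu A ξ * ww b b' ξ υ * uu A υ =
      (if b ∈ A ∧ b' ∈ A then 1 else 0) * ((#A : ℝ) ^ t * (t / #A)) := by
  have hA' : (0:ℝ) < (#A : ℝ) := by exact_mod_cast hA.card_pos
  have h0 : ∀ (ξ : Fin t → G) (l : Fin t), uu A ξ * uu A (Function.update ξ l b') =
      uu A ξ * if b' ∈ A then 1 else 0 := by
    intro ξ l
    by_cases hξ : ∀ i, ξ i ∈ A
    · have h1 : uu A ξ = 1 := prod_eq_one fun i _ => if_pos (hξ i)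
      rw [h1, one_mul, one_mul]
      by_cases hb : b' ∈ A
      · rw [if_pos hb]
        refine prod_eq_one fun i _ => if_pos ?_
        by_cases hi : i = l
        · subst hi; simpa using hb
        · simpa [hi] using hξ i
      · rw [if_neg hb]
        exact prod_eq_zero (mem_univ l) (by simp [hb])
    · push Not at hξ
      obtain ⟨i, hi⟩ := hξ
      have h1 : uu A ξ = 0 := prod_eq_zero (mem_univ i) (if_neg hi)
      rw [h1, zero_mul, zero_mul]
  have h1 : ∀ ξ : Fin t → G, ∑ υ : Fin t → G, uu A ξ * ww b b' ξ υ * uu A υ =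
      ∑ l : Fin t, (uu A ξ * if ξ l = b then 1 else 0) * (if b' ∈ A then 1 else 0) := by
    intro ξ
    simp only [ww, mul_sum, sum_mul]
    rw [sum_comm]
    refine sum_congr rfl fun l _ => ?_
    rw [Fintype.sum_eq_single (Function.update ξ l b')]
    · have := h0 ξ l
      by_cases h : ξ l = b
      · simp only [h, and_self, if_true, mul_one]; exact this
      · simp [h]
    · intro υ hυ
      simp [hυ]
  simp only [h1]
  rw [sum_comm]
  simp only [← sum_mul, uu_one A hA, sum_const, card_univ, Fintype.card_fin, nsmul_eq_mul]
  by_cases h : b ∈ A <;> by_cases h' : b' ∈ A <;> simp [h, h']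
  ring

end kik
end SzRD

namespace SzRD
open Finset
open scoped BigOperators
open Matrix
set_option linter.unusedSectionVars false
section kik2
variable {G : Type} [Fintype G] [DecidableEq G] {t k : ℕ}

noncomputable def vv (A : Finset G) (x : Fin k → Fin t → G) : ℝ := ∏ j, uu A (x j)

noncomputable def W0 (e f : Fin k → G → G) (x y : Fin k → Fin t → G) : ℝ :=
  ∑ a, ∏ j, ww (e j a) (f j a) (x j) (y j)

noncomputable def dg (e : Fin k → G → G) (x : Fin k → Fin t → G) : ℝ :=
  ∑ a, ∏ j, cc (e j a) (x j)

noncomputable def KW (R : ℝ) (e f : Fin k → G → G) (x y : Fin k → Fin t → G) : ℝ :=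
  if dg e x ≤ R ∧ dg f y ≤ R then W0 e f x y else 0

noncomputable def KM (R : ℝ) (e f : Fin k → G → G) :
    Matrix (Fin k → Fin t → G) (Fin k → Fin t → G) ℝ :=
  fun x y => KW R e f x y + KW R e f y x

lemma vv_nonneg (A : Finset G) (x : Fin k → Fin t → G) : 0 ≤ vv A x :=
  prod_nonneg fun _ _ => uu_nonneg _ _

lemma vv_le_one (A : Finset G) (x : Fin k → Fin t → G) : vv A x ≤ 1 :=
  prod_le_one (fun _ _ => uu_nonneg _ _) fun _ _ => uu_le_one _ _

lemma W0_nonneg (e f : Fin k → G → G) (x y : Fin k → Fin t → G) : 0 ≤ W0 e f x y :=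
  sum_nonneg fun _ _ => prod_nonneg fun _ _ => ww_nonneg _ _ _ _

lemma dg_nonneg (e : Fin k → G → G) (x : Fin k → Fin t → G) : 0 ≤ dg e x :=
  sum_nonneg fun _ _ => prod_nonneg fun _ _ => cc_nonneg _ _

lemma KW_nonneg (R : ℝ) (e f : Fin k → G → G) (x y : Fin k → Fin t → G) : 0 ≤ KW R e f x y := by
  unfold KW; split_ifs
  · exact W0_nonneg _ _ _ _
  · exact le_rfl

lemma KW_le (R : ℝ) (e f : Fin k → G → G) (x y : Fin k → Fin t → G) :
    KW R e f x y ≤ W0 e f x y := by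
  unfold KW; split_ifs
  · exact le_rfl
  · exact W0_nonneg _ _ _ _

lemma nsq_vv (A : Finset G) : nsq (vv (t := t) (k := k) A) = ((#A : ℝ) ^ t) ^ k := by
  simp only [nsq, vv, ← prod_pow, uu_sq]
  rw [sum_pi_prod (fun _ ξ => uu A ξ)]
  simp [sum_uu]

lemma W0_row (e f : Fin k → G → G) (x : Fin k → Fin t → G) : ∑ y, W0 e f x y = dg e x := by
  simp only [W0, dg]
  rw [sum_comm]
  refine sum_congr rfl fun a _ => ?_
  rw [sum_pi_prod (fun j υ => ww (e j a) (f j a) (x j) υ)]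
  simp only [ww_row]

lemma W0_symm (e f : Fin k → G → G) (x y : Fin k → Fin t → G) : W0 e f x y = W0 f e y x :=
  sum_congr rfl fun _ _ => prod_congr rfl fun _ _ => ww_symm _ _ _ _

lemma W0_col (e f : Fin k → G → G) (y : Fin k → Fin t → G) : ∑ x, W0 e f x y = dg f y := by
  rw [← W0_row f e y]
  exact sum_congr rfl fun _ _ => W0_symm _ _ _ _

lemma qf_W0 (A : Finset G) (hA : A.Nonempty) (e f : Fin k → G → G) :
    ∑ x, ∑ y, vv (t := t) A x * W0 e f x y * vv A y =
      (#{a : G | ∀ j, e j a ∈ A ∧ f j a ∈ A} : ℝ) * ((t / #A : ℝ) ^ k * ((#A : ℝ) ^ t) ^ k) := by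
  have h1 : ∀ x : Fin k → Fin t → G, ∀ y, vv A x * W0 e f x y * vv A y =
      ∑ a, ∏ j, (uu A (x j) * ww (e j a) (f j a) (x j) (y j) * uu A (y j)) := by
    intro x y
    simp only [vv, W0, mul_sum, sum_mul, prod_mul_distrib]
  have h2 : ∀ x : Fin k → Fin t → G, ∑ y, vv A x * W0 e f x y * vv A y =
      ∑ a, ∏ j, ∑ υ, (uu A (x j) * ww (e j a) (f j a) (x j) υ * uu A υ) := by
    intro x
    simp only [h1]
    rw [sum_comm]
    refine sum_congr rfl fun a _ => ?_
    rw [sum_pi_prod (fun j υ => uu A (x j) * ww (e j a) (f j a) (x j) υ * uu A υ)]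
  simp only [h2]
  rw [sum_comm]
  have h3 : ∀ a, ∑ x : Fin k → Fin t → G, ∏ j, ∑ υ, (uu A (x j) * ww (e j a) (f j a) (x j) υ * uu A υ)
      = if (∀ j, e j a ∈ A ∧ f j a ∈ A) then ((t / #A : ℝ) ^ k * ((#A : ℝ) ^ t) ^ k) else 0 := by
    intro a
    rw [sum_pi_prod (fun j ξ => ∑ υ, uu A ξ * ww (e j a) (f j a) ξ υ * uu A υ)]
    simp only [ww_form A hA]
    split_ifs with h
    · simp only [h, and_self, if_true, one_mul, prod_const, card_univ, Fintype.card_fin]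
      rw [← mul_pow, mul_comm]
    · push Not at h
      obtain ⟨j, hj⟩ := h
      refine prod_eq_zero (mem_univ j) ?_
      rw [if_neg (fun h => hj h.1 h.2), zero_mul]
  simp only [h3]
  rw [← sum_filter, sum_const, nsmul_eq_mul]

lemma dg_two (A : Finset G) (hA : A.Nonempty) (e : Fin k → G → G)
    (he : ∀ j, Function.Injective (e j)) {lam : ℝ} (hl : lam = t / #A) :
    ∑ x : Fin k → Fin t → G, vv A x * dg e x ^ 2 ≤
      ((#A : ℝ) ^ t) ^ k * ((Fintype.card G : ℕ) ^ 2 * (lam ^ 2) ^ k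
        + (Fintype.card G : ℕ) * (lam ^ 2 + lam) ^ k) := by
  have hl0 : 0 ≤ lam := by rw [hl]; positivity
  have h1 : ∀ x : Fin k → Fin t → G, vv A x * dg e x ^ 2 =
      ∑ a, ∑ a', ∏ j, (uu A (x j) * (cc (e j a) (x j) * cc (e j a') (x j))) := by
    intro x
    simp_rw [sq, dg, sum_mul_sum, mul_sum, vv, prod_mul_distrib]
  have h2 : ∀ a a', ∑ x : Fin k → Fin t → G,
      ∏ j, (uu A (x j) * (cc (e j a) (x j) * cc (e j a') (x j))) ≤
      ((#A : ℝ) ^ t) ^ k * ((lam ^ 2) ^ k + if a' = a then (lam ^ 2 + lam) ^ k else 0) := by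
    intro a a'
    rw [sum_pi_prod (fun j ξ => uu A ξ * (cc (e j a) ξ * cc (e j a') ξ))]
    have h3 : ∀ j ∈ (univ : Finset (Fin k)), ∑ ξ : Fin t → G, uu A ξ * (cc (e j a) ξ * cc (e j a') ξ)
        ≤ (#A : ℝ) ^ t * (lam ^ 2 + (if a = a' then 1 else 0) * lam) := by
      intro j _
      have := cc_two (t := t) A hA (e j a) (e j a')
      rw [hl]
      refine this.trans (le_of_eq ?_)
      simp only [(he j).eq_iff]
    refine (prod_le_prod (fun j _ => sum_nonneg fun ξ _ => mul_nonneg (uu_nonneg _ _)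
      (mul_nonneg (cc_nonneg _ _) (cc_nonneg _ _))) h3).trans ?_
    rw [prod_const, card_univ, Fintype.card_fin, mul_pow]
    refine mul_le_mul_of_nonneg_left ?_ (by positivity)
    by_cases h : a = a'
    · subst h
      simp only [if_true, one_mul]
      have : 0 ≤ (lam ^ 2) ^ k := by positivity
      linarith
    · rw [if_neg h, if_neg (fun h' => h h'.symm)]; simp
  simp only [h1]
  rw [sum_comm]
  have h4 : ∀ a, ∑ x : Fin k → Fin t → G, ∑ a',
      ∏ j, (uu A (x j) * (cc (e j a) (x j) * cc (e j a') (x j))) ≤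
      ((#A : ℝ) ^ t) ^ k * ((Fintype.card G : ℕ) * (lam ^ 2) ^ k + (lam ^ 2 + lam) ^ k) := by
    intro a
    rw [sum_comm]
    refine (sum_le_sum fun a' _ => h2 a a').trans (le_of_eq ?_)
    rw [← mul_sum, sum_add_distrib, sum_ite_eq' univ a]
    simp
  refine (sum_le_sum fun a _ => h4 a).trans (le_of_eq ?_)
  rw [sum_const, nsmul_eq_mul, card_univ]
  ring

lemma KM_symm (R : ℝ) (e f : Fin k → G → G) : (KM (t := t) R e f)ᵀ = KM R e f := by
  ext x y
  simp only [transpose_apply, KM]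
  ring

lemma KM_row {R : ℝ} (hR : 0 ≤ R) (e f : Fin k → G → G) (x : Fin k → Fin t → G) :
    ∑ y, |KM R e f x y| ≤ 2 * R := by
  have h1 : ∀ y, |KM R e f x y| = KW R e f x y + KW R e f y x := fun y =>
    abs_of_nonneg (add_nonneg (KW_nonneg _ _ _ _ _) (KW_nonneg _ _ _ _ _))
  simp only [h1, sum_add_distrib]
  have h2 : ∑ y, KW R e f x y ≤ R := by
    by_cases h : dg e x ≤ R
    · exact (sum_le_sum fun y _ => KW_le R e f x y).trans ((W0_row e f x).le.trans h)
    · rw [show ∑ y, KW R e f x y = 0 from sum_eq_zero fun y _ => if_neg fun h' => h h'.1]; exact hR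
  have h3 : ∑ y, KW R e f y x ≤ R := by
    by_cases h : dg f x ≤ R
    · exact (sum_le_sum fun y _ => KW_le R e f y x).trans ((W0_col e f x).le.trans h)
    · rw [show ∑ y, KW R e f y x = 0 from sum_eq_zero fun y _ => if_neg fun h' => h h'.2]; exact hR
  linarith

lemma qf_KM (R : ℝ) (e f : Fin k → G → G) (v : (Fin k → Fin t → G) → ℝ) :
    qf (KM R e f) v = 2 * ∑ x, ∑ y, v x * KW R e f x y * v y := by
  simp only [qf, KM, mul_add, add_mul, sum_add_distrib, two_mul]
  congr 1
  rw [sum_comm]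
  refine sum_congr rfl fun x _ => sum_congr rfl fun y _ => by ring

lemma qf_KM_zero (R : ℝ) (A : Finset G) (hA : A.Nonempty) (e f : Fin k → G → G)
    (h : ∀ a, ¬ ∀ j, e j a ∈ A ∧ f j a ∈ A) : qf (KM (t := t) R e f) (vv A) = 0 := by
  rw [qf_KM]
  have h0 := qf_W0 (t := t) A hA e f
  rw [filter_false_of_mem (fun a _ => h a)] at h0
  simp only [card_empty, Nat.cast_zero, zero_mul] at h0
  have h1 : ∑ x, ∑ y, vv (t := t) A x * KW R e f x y * vv A y ≤
      ∑ x, ∑ y, vv (t := t) A x * W0 e f x y * vv A y :=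
    sum_le_sum fun x _ => sum_le_sum fun y _ => mul_le_mul_of_nonneg_right
      (mul_le_mul_of_nonneg_left (KW_le _ _ _ _ _) (vv_nonneg _ _)) (vv_nonneg _ _)
  have h2 : 0 ≤ ∑ x, ∑ y, vv (t := t) A x * KW R e f x y * vv A y :=
    sum_nonneg fun x _ => sum_nonneg fun y _ => mul_nonneg
      (mul_nonneg (vv_nonneg _ _) (KW_nonneg _ _ _ _ _)) (vv_nonneg _ _)
  linarith

lemma qf_KM_ge {R : ℝ} (hR : 0 < R) (A : Finset G) (hA : A.Nonempty) (e f : Fin k → G → G)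
    (he : ∀ j, Function.Injective (e j)) (hf : ∀ j, Function.Injective (f j))
    {lam B : ℝ} (hl : lam = t / #A)
    (hB : (Fintype.card G : ℕ) ^ 2 * (lam ^ 2) ^ k
        + (Fintype.card G : ℕ) * (lam ^ 2 + lam) ^ k ≤ B) :
    2 * ((#{a : G | ∀ j, e j a ∈ A ∧ f j a ∈ A} : ℝ) * lam ^ k - 2 * B / R) *
      nsq (vv (t := t) (k := k) A) ≤ qf (KM (t := t) R e f) (vv A) := by
  rw [qf_KM, nsq_vv]
  have h0 := qf_W0 (t := t) A hA e f
  have hZ : 0 ≤ ((#A : ℝ) ^ t) ^ k := by positivity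
  have he2 := (dg_two (t := t) A hA e he hl).trans (mul_le_mul_of_nonneg_left hB hZ)
  have hf2 := (dg_two (t := t) A hA f hf hl).trans (mul_le_mul_of_nonneg_left hB hZ)
  have h1 : ∀ x y : Fin k → Fin t → G, vv A x * W0 e f x y * vv A y ≤ vv A x * KW R e f x y * vv A y
      + vv A x * (dg e x / R) * W0 e f x y + vv A y * (dg f y / R) * W0 e f x y := by
    intro x y
    have hx := vv_nonneg A x
    have hy := vv_nonneg A y
    have hx1 := vv_le_one A x
    have hy1 := vv_le_one A y
    have hw := W0_nonneg e f x y
    have hdx := dg_nonneg e x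
    have hdy := dg_nonneg f y
    have ha : 0 ≤ vv A x * (dg e x / R) * W0 e f x y := by positivity
    have hb : 0 ≤ vv A y * (dg f y / R) * W0 e f x y := by positivity
    by_cases h : dg e x ≤ R ∧ dg f y ≤ R
    · rw [KW, if_pos h]; linarith
    · rw [KW, if_neg h]
      have hxw : vv A x * W0 e f x y * vv A y ≤ vv A x * W0 e f x y :=
        mul_le_of_le_one_right (by positivity) hy1
      have hyw : vv A x * W0 e f x y * vv A y ≤ vv A y * W0 e f x y := by
        rw [mul_comm]
        exact mul_le_mul_of_nonneg_left (mul_le_of_le_one_left hw hx1) hy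
      by_cases h' : dg e x ≤ R
      · have h3 : 1 ≤ dg f y / R := by
          rw [one_le_div hR]; exact (not_le.1 fun h4 => h ⟨h', h4⟩).le
        have : vv A y * 1 * W0 e f x y ≤ vv A y * (dg f y / R) * W0 e f x y := by gcongr
        linarith
      · have h3 : 1 ≤ dg e x / R := by
          rw [one_le_div hR]; exact (not_le.1 h').le
        have : vv A x * 1 * W0 e f x y ≤ vv A x * (dg e x / R) * W0 e f x y := by gcongr
        linarith
  have h2 := sum_le_sum fun x (_ : x ∈ (univ : Finset (Fin k → Fin t → G))) =>
    sum_le_sum fun y (_ : y ∈ (univ : Finset (Fin k → Fin t → G))) => h1 x y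
  simp only [sum_add_distrib] at h2
  have h3 : ∑ x : Fin k → Fin t → G, ∑ y, vv A x * (dg e x / R) * W0 e f x y =
      (∑ x : Fin k → Fin t → G, vv A x * dg e x ^ 2) / R := by
    rw [sum_div]
    refine sum_congr rfl fun x _ => ?_
    rw [← mul_sum, W0_row]; ring
  have h4 : ∑ x : Fin k → Fin t → G, ∑ y, vv A y * (dg f y / R) * W0 e f x y =
      (∑ x : Fin k → Fin t → G, vv A x * dg f x ^ 2) / R := by
    rw [sum_div, sum_comm]
    refine sum_congr rfl fun x _ => ?_
    rw [← mul_sum, W0_col]; ring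
  rw [h0, h3, h4, ← hl] at h2
  have h5 := div_le_div_of_nonneg_right he2 hR.le
  have h6 := div_le_div_of_nonneg_right hf2 hR.le
  have h7 : ((#A : ℝ) ^ t) ^ k * B / R = (B / R) * ((#A : ℝ) ^ t) ^ k := by ring
  rw [h7] at h5 h6
  have h8 : 2 * B / R = 2 * (B / R) := by ring
  rw [h8]
  nlinarith

end kik2
end SzRD

namespace SzRD
open Finset
open scoped BigOperators
open Matrix

lemma qf_zero {X : Type*} [Fintype X] (v : X → ℝ) : qf (0 : Matrix X X ℝ) v = 0 := by
  simp [qf]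

lemma arith5 {c N Z l S : ℝ} (hc : 0 < c) (hN : 0 < N) (hcN : 2 ≤ c * N) (hZ : 0 ≤ Z) (hl0 : 0 ≤ l)
    (hl : 1 ≤ N * l) (hS : c * N ^ 2 ≤ S) :
    c / 2 * Z * N ≤ 2 * (S * l - N * (c / 4) - N * l) * Z := by
  have h4 : c * N ^ 2 / 2 ≤ S - N := by
    have : 2 * N ≤ c * N * N := mul_le_mul_of_nonneg_right hcN hN.le
    nlinarith
  have h5 : (c * N ^ 2 / 2) * l ≤ (S - N) * l := mul_le_mul_of_nonneg_right h4 hl0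
  have h6 : c * N / 2 * 1 ≤ c * N / 2 * (N * l) := mul_le_mul_of_nonneg_left hl (by positivity)
  have h3 : c / 4 * N ≤ S * l - N * (c / 4) - N * l := by
    have : c * N / 2 * (N * l) = (c * N ^ 2 / 2) * l := by ring
    linarith
  have := mul_le_mul_of_nonneg_right h3 hZ
  linarith

theorem iid_bound (k : ℕ) (hk : 0 < k) (α : ℝ) (hα : 0 < α) : ∃ K : ℝ, 0 < K ∧ ∃ N1 : ℕ,
    ∀ (N : ℕ) [NeZero N], N1 ≤ N → ∀ t : ℕ, (N : ℝ) ^ k ≤ N * (t : ℝ) ^ k →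
      (N : ℝ) * (t : ℝ) ^ k ≤ (2 * N) ^ k → (t : ℝ) ≤ 2 * N →
    ∀ m j : ℕ, 0 < m →
    den {u : Fin m → ZMod N | ∃ A : Finset (ZMod N), α * N ≤ #A ∧ ∀ i, u i ≠ 0 → ∀ a : ZMod N,
      ¬ ∀ l : ℕ, l < 2 * k → a + (l : ZMod N) * u i ∈ A} ≤
      2 * ((N : ℝ) ^ t) ^ k * (K * 2 ^ j / m) ^ 2 ^ j := by
  obtain ⟨c, hc, hv⟩ := varnavides (2 * k - 1) α hα
  have hk2 : 2 * k - 1 + 1 = 2 * k := by omega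
  rw [hk2] at hv
  set b : ℝ := (2 / α) ^ k with hb
  set B : ℝ := b ^ 2 + b * (2 / α + 1) ^ k with hBdef
  have hb0 : 0 < b := by positivity
  have hB0 : 0 < B := by positivity
  set R : ℝ := 8 * B / c with hR
  have hR0 : 0 < R := by positivity
  obtain ⟨N1, hN1⟩ := exists_nat_ge (2 / c)
  refine ⟨(2 * (2 * R)) ^ 2 * (2 * Real.exp 1) / (c / 2) ^ 2, by positivity, N1, ?_⟩
  intro N _ hN t ht1 ht2 ht3 m j hm
  have hNpos : (0 : ℝ) < N := by exact_mod_cast Nat.pos_of_ne_zero (NeZero.ne N)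
  have hcN : 2 ≤ c * N := by
    have : (2 / c) ≤ N := hN1.trans (by exact_mod_cast hN)
    rw [div_le_iff₀ hc] at this; linarith
  let e : ZMod N → Fin k → ZMod N → ZMod N := fun d i a => a + ((2 * (i : ℕ) : ℕ) : ZMod N) * d
  let f : ZMod N → Fin k → ZMod N → ZMod N := fun d i a => a + ((2 * (i : ℕ) + 1 : ℕ) : ZMod N) * d
  have he : ∀ d i, Function.Injective (e d i) := fun d i => add_left_injective _
  have hf : ∀ d i, Function.Injective (f d i) := fun d i => add_left_injective _
  have hef : ∀ (A : Finset (ZMod N)) d a, (∀ i, e d i a ∈ A ∧ f d i a ∈ A) ↔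
      ∀ l : ℕ, l < 2 * k → a + (l : ZMod N) * d ∈ A := by
    intro A d a
    constructor
    · intro h l hl
      obtain ⟨i, hi | hi⟩ : ∃ i, l = 2 * i ∨ l = 2 * i + 1 := ⟨l / 2, by omega⟩
      · have := (h ⟨i, by omega⟩).1
        subst hi; exact this
      · have := (h ⟨i, by omega⟩).2
        subst hi; exact this
    · intro h i
      have := i.isLt
      exact ⟨h _ (by omega), h _ (by omega)⟩
  let M : ZMod N → Matrix (Fin k → Fin t → ZMod N) (Fin k → Fin t → ZMod N) ℝ :=
    fun d => if d = 0 then 0 else KM R (e d) (f d)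
  have hM : ∀ d, (M d)ᵀ = M d := by
    intro d
    by_cases hd : d = 0
    · simp [M, hd]
    · simp only [M, hd, if_false]; exact KM_symm _ _ _
  have hMr : ∀ d x, ∑ y, |M d x y| ≤ 2 * R := by
    intro d x
    by_cases hd : d = 0
    · simp only [M, hd, if_true, Matrix.zero_apply, abs_zero, sum_const_zero]; positivity
    · simp only [M, hd, if_false]; exact KM_row hR0.le _ _ _
  have ht := tail M hM (by positivity : 0 ≤ 2 * R) hMr (by positivity : 0 < c / 2) m j hm
  have hcard : ((Fintype.card (Fin k → Fin t → ZMod N) : ℕ) : ℝ) = ((N : ℝ) ^ t) ^ k := by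
    simp [ZMod.card]
  rw [hcard] at ht
  have heq : (2 * (2 * R)) ^ 2 * (2 * Real.exp 1) / (c / 2) ^ 2 * 2 ^ j / (m : ℝ) =
    (2 * (2 * R)) ^ 2 * (2 * 2 ^ j * Real.exp 1) / ((c / 2) ^ 2 * m) := by
    have : (m : ℝ) ≠ 0 := by exact_mod_cast hm.ne'
    field_simp
  rw [heq]
  refine le_trans (den_mono ?_) ht
  rintro u ⟨A, hA, hu⟩
  have hA0 : (0 : ℝ) < #A := lt_of_lt_of_le (by positivity) hA
  have hAne : A.Nonempty := card_pos.1 (by exact_mod_cast hA0)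
  have hAN : (#A : ℝ) ≤ N := by
    have := card_le_univ A
    rw [ZMod.card] at this
    exact_mod_cast this
  refine ⟨vv A, ?_, ?_, ?_⟩
  · rw [nsq_vv]; positivity
  · intro i
    by_cases hd : u i = 0
    · simp only [M, hd, if_true]; exact qf_zero _
    · simp only [M, hd, if_false]
      refine qf_KM_zero R A hAne _ _ fun a h => hu i hd a ((hef A _ a).1 h)
  · set lam : ℝ := t / #A with hlam
    have hl0 : 0 ≤ lam := by positivity
    have hlamk : lam ^ k = (t : ℝ) ^ k / (#A : ℝ) ^ k := by rw [hlam, div_pow]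
    have hl1 : 1 ≤ N * lam ^ k := by
      rw [hlamk, mul_div_assoc', one_le_div (by positivity)]
      exact (pow_le_pow_left₀ hA0.le hAN k).trans ht1
    have hl2 : N * lam ^ k ≤ b := by
      rw [hlamk, mul_div_assoc', div_le_iff₀ (by positivity), hb, ← mul_pow]
      refine ht2.trans (pow_le_pow_left₀ (by positivity) ?_ k)
      rw [div_mul_eq_mul_div, le_div_iff₀ hα]
      linarith [mul_le_mul_of_nonneg_left hA (by norm_num : (0:ℝ) ≤ 2)]
    have hl3 : lam ≤ 2 / α := by
      rw [hlam, div_le_div_iff₀ hA0 hα]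
      nlinarith
    have hB : ((Fintype.card (ZMod N) : ℕ) : ℝ) ^ 2 * (lam ^ 2) ^ k
        + (Fintype.card (ZMod N) : ℕ) * (lam ^ 2 + lam) ^ k ≤ B := by
      rw [ZMod.card]
      have e1 : (N : ℝ) ^ 2 * (lam ^ 2) ^ k = (N * lam ^ k) ^ 2 := by
        rw [mul_pow, ← pow_mul, ← pow_mul, mul_comm 2 k]
      have e2 : (N : ℝ) * (lam ^ 2 + lam) ^ k = (N * lam ^ k) * (lam + 1) ^ k := by
        rw [mul_assoc, ← mul_pow]; ring
      rw [e1, e2, hBdef]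
      gcongr
    have h2B : 2 * B / R = c / 4 := by
      rw [hR]; field_simp; norm_num
    set Z := nsq (vv (t := t) (k := k) A) with hZ
    have hZ0 : 0 ≤ Z := nsq_nonneg _
    let L : ZMod N → ℝ := fun d => (#{a : ZMod N | ∀ i, e d i a ∈ A ∧ f d i a ∈ A} : ℝ)
    have hLN : ∀ d, L d ≤ N := by
      intro d
      have := card_le_univ ({a : ZMod N | ∀ i, e d i a ∈ A ∧ f d i a ∈ A} : Finset (ZMod N))
      rw [ZMod.card] at this
      exact Nat.cast_le.2 this
    have hq : ∀ d, 2 * (L d * lam ^ k - c / 4 - if d = 0 then N * lam ^ k else 0) * Z ≤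
        qf (M d) (vv A) := by
      intro d
      by_cases hd : d = 0
      · rw [if_pos hd]
        have : qf (M d) (vv A) = 0 := by simp only [M, hd, if_true]; exact qf_zero _
        rw [this]
        refine mul_nonpos_of_nonpos_of_nonneg ?_ hZ0
        have := mul_le_mul_of_nonneg_right (hLN d) (by positivity : 0 ≤ lam ^ k)
        linarith
      · have h1 := qf_KM_ge (t := t) hR0 A hAne (e d) (f d) (he d) (hf d) hlam hB
        rw [h2B] at h1
        simp only [M, hd, if_false, sub_zero]
        exact h1
    have hsumL : c * N ^ 2 ≤ ∑ d, L d := by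
      have h1 := hv N A hA
      have h2 : den {p : ZMod N × ZMod N | ∀ j : ℕ, j < 2 * k → p.1 + (j : ZMod N) * p.2 ∈ A} =
          (∑ d, L d) / (N ^ 2 : ℝ) := by
        unfold den
        rw [Fintype.expect_eq_sum_div_card, Fintype.sum_prod_type_right]
        congr 1
        · refine sum_congr rfl fun d _ => ?_
          simp only [L]
          rw [card_filter]
          push_cast
          refine sum_congr rfl fun a _ => ?_
          by_cases h : ∀ i, e d i a ∈ A ∧ f d i a ∈ A
          · rw [if_pos h]
            exact ind_pos (show (a, d) ∈ {p : ZMod N × ZMod N | ∀ j : ℕ, j < 2 * k →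
              p.1 + (j : ZMod N) * p.2 ∈ A} from (hef A d a).1 h)
          · rw [if_neg h]
            exact ind_neg (show (a, d) ∉ {p : ZMod N × ZMod N | ∀ j : ℕ, j < 2 * k →
              p.1 + (j : ZMod N) * p.2 ∈ A} from fun h' => h ((hef A d a).2 h'))
        · simp [ZMod.card, sq]
      rw [h2, le_div_iff₀ (by positivity)] at h1
      exact h1
    have hsum := sum_le_sum fun d (_ : d ∈ (univ : Finset (ZMod N))) => hq d
    rw [← sum_mul, ← mul_sum] at hsum
    simp only [sum_sub_distrib, ← sum_mul, sum_const, sum_ite_eq', mem_univ, if_true,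
      card_univ, ZMod.card, nsmul_eq_mul] at hsum
    rw [Fintype.expect_eq_sum_div_card, ZMod.card, le_div_iff₀ hNpos]
    refine le_trans ?_ hsum
    exact arith5 hc hNpos hcN hZ0 (by positivity) hl1 hsumL

end SzRD

namespace SzRD
open Finset
open scoped BigOperators

lemma perm_trans {G : Type} [Fintype G] [DecidableEq G] (D D' : Finset G) (h : #D = #D') :
    ∃ σ : Equiv.Perm G, D.map σ.toEmbedding = D' := by
  classical
  let e : D ≃ D' := Finset.equivOfCardEq h
  let σ : Equiv.Perm G := Equiv.extendSubtype (p := fun x => x ∈ D) (q := fun x => x ∈ D') e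
  refine ⟨σ, eq_of_subset_of_card_le ?_ ?_⟩
  · intro x hx
    obtain ⟨y, hy, rfl⟩ := mem_map.1 hx
    exact Equiv.extendSubtype_mem e y hy
  · rw [card_map, h]

lemma unif {G : Type} [Fintype G] [DecidableEq G] [Nonempty G] (P : Finset G → Prop) [DecidablePred P]
    (hP : ∀ S T, S ⊆ T → P T → P S) (m : ℕ) (hm : m ≤ Fintype.card G) :
    (#(filter P (powersetCard m univ)) : ℝ) ≤
      den {u : Fin m → G | P (univ.image u)} * #(powersetCard m (univ : Finset G)) := by
  classical
  let T : Finset G → ℝ := fun D => ∑ π : Equiv.Perm G, if P (D.map π.toEmbedding) then 1 else 0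
  have hTc : ∀ D D' : Finset G, #D = #D' → T D = T D' := by
    intro D D' h
    obtain ⟨σ, rfl⟩ := perm_trans D D' h
    simp only [T]
    refine Fintype.sum_equiv (Equiv.mulRight σ⁻¹) _ _ fun π => ?_
    have : (D.map σ.toEmbedding).map (Equiv.mulRight σ⁻¹ π).toEmbedding = D.map π.toEmbedding := by
      rw [map_map]; congr 1; ext x; simp
    rw [this]
  have hTm : ∀ S S' : Finset G, S ⊆ S' → T S' ≤ T S := by
    intro S S' h
    refine sum_le_sum fun π _ => ?_
    by_cases h' : P (S'.map π.toEmbedding)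
    · rw [if_pos h', if_pos (hP _ _ (map_subset_map.2 h) h')]
    · rw [if_neg h']; split_ifs <;> norm_num
  obtain ⟨D0, hD0⟩ : ∃ D0 : Finset G, #D0 = m := by
    obtain ⟨D0, _, h⟩ := exists_subset_card_eq (s := (univ : Finset G)) (n := m) (by simpa using hm)
    exact ⟨D0, h⟩
  set F : ℝ := ((Fintype.card (Equiv.Perm G) : ℕ) : ℝ) with hF
  have hF0 : 0 < F := by rw [hF]; exact_mod_cast Fintype.card_pos
  -- sum over m-sets
  have h1 : F * #(filter P (powersetCard m univ)) = T D0 * #(powersetCard m (univ : Finset G)) := by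
    have h2 : ∑ D ∈ powersetCard m (univ : Finset G), T D =
        T D0 * #(powersetCard m (univ : Finset G)) := by
      rw [sum_congr rfl fun D hD => hTc D D0 ((mem_powersetCard.1 hD).2.trans hD0.symm), sum_const,
        nsmul_eq_mul, mul_comm]
    rw [← h2, sum_comm]
    have h3 : ∀ π : Equiv.Perm G, ∑ D ∈ powersetCard m (univ : Finset G),
        (if P (D.map π.toEmbedding) then (1:ℝ) else 0) = #(filter P (powersetCard m univ)) := by
      intro π
      rw [card_filter]; push_cast
      refine sum_bij' (fun D _ => D.map π.toEmbedding) (fun D _ => D.map π.symm.toEmbedding) ?_ ?_ ?_ ?_ ?_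
      · intro D hD; rw [mem_powersetCard] at hD ⊢; exact ⟨subset_univ _, by rw [card_map]; exact hD.2⟩
      · intro D hD; rw [mem_powersetCard] at hD ⊢; exact ⟨subset_univ _, by rw [card_map]; exact hD.2⟩
      · intro D _; ext x; simp
      · intro D _; ext x; simp
      · intro D _; rfl
    rw [sum_congr rfl fun π _ => h3 π, sum_const, nsmul_eq_mul, card_univ]
  -- sum over u
  have h4 : T D0 ≤ F * den {u : Fin m → G | P (univ.image u)} := by
    have h5 : ∀ π : Equiv.Perm G, 𝔼 u : Fin m → G, (if P ((univ.image u).map π.toEmbedding) then (1:ℝ) else 0)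
        = den {u : Fin m → G | P (univ.image u)} := by
      intro π
      refine Fintype.expect_equiv (Equiv.arrowCongr (Equiv.refl _) π) _ _ fun u => ?_
      have h6 : (univ.image u).map π.toEmbedding =
          univ.image ((Equiv.arrowCongr (Equiv.refl (Fin m)) π) u) := by
        rw [map_eq_image, image_image]; rfl
      rw [h6]
      by_cases h : P (univ.image ((Equiv.arrowCongr (Equiv.refl (Fin m)) π) u))
      · rw [if_pos h]
        exact (ind_pos (show _ ∈ {u : Fin m → G | P (univ.image u)} from h)).symm
      · rw [if_neg h]
        exact (ind_neg (show _ ∉ {u : Fin m → G | P (univ.image u)} from h)).symm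
    have h7 : 𝔼 u : Fin m → G, T (univ.image u) = F * den {u : Fin m → G | P (univ.image u)} := by
      simp only [T]
      rw [expect_sum_comm, sum_congr rfl fun π _ => h5 π, sum_const, nsmul_eq_mul, card_univ]
    rw [← h7]
    refine le_trans (le_of_eq (Fintype.expect_const (ι := Fin m → G) (T D0)).symm) (ex_mono fun u => ?_)
    have hc : #(univ.image u) ≤ m := card_image_le.trans (by simp)
    obtain ⟨D, hD, _, hD2⟩ := exists_subsuperset_card_eq (subset_univ (univ.image u)) hc (by simpa using hm)
    rw [hTc D0 D (hD0.trans hD2.symm)]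
    exact hTm _ _ hD
  have h8 : F * #(filter P (powersetCard m univ)) ≤ F * (den {u : Fin m → G | P (univ.image u)} *
      #(powersetCard m (univ : Finset G))) := by
    rw [h1, ← mul_assoc]
    exact mul_le_mul_of_nonneg_right h4 (Nat.cast_nonneg _)
  exact le_of_mul_le_mul_left h8 hF0

end SzRD

namespace SzRD
open Finset
open scoped BigOperators

lemma num_bound {β K N : ℝ} (hβ : 0 < β) (hβ1 : β < 1) (hK : 0 < K) {k t m : ℕ} (hk : 0 < k) (ht : 0 < t)
    (hN : 1 ≤ Real.log N) (hN0 : 0 < N)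
    (hm : 2 * Real.exp 1 * K * ((k + Real.log (2 / β)) * (t * Real.log N)) ≤ m) :
    ∃ j : ℕ, 2 * (N ^ t) ^ k * (K * 2 ^ j / m) ^ 2 ^ j ≤ β := by
  set L : ℝ := k * t * Real.log N + Real.log (2 / β) with hL
  have hk1 : (1:ℝ) ≤ k := by exact_mod_cast hk
  have ht1 : (1:ℝ) ≤ t := by exact_mod_cast ht
  have hkt : (1:ℝ) ≤ k * t := by nlinarith
  have hlb : 0 ≤ Real.log (2 / β) := by
    refine Real.log_nonneg ?_
    rw [one_le_div hβ]; linarith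
  have hL1 : 1 ≤ L := by rw [hL]; nlinarith
  have htl : 1 ≤ t * Real.log N := by nlinarith
  have hLle : L ≤ (k + Real.log (2 / β)) * (t * Real.log N) := by
    rw [hL]; nlinarith
  obtain ⟨n, hn1, hn2⟩ := exists_nat_pow_near hL1 (by norm_num : (1:ℝ) < 2)
  have he := Real.exp_pos 1
  have hm2 : 2 * Real.exp 1 * K * L ≤ m := le_trans (by gcongr) hm
  have hm0 : (0:ℝ) < m := lt_of_lt_of_le (by positivity) hm2
  refine ⟨n + 1, ?_⟩
  have h1 : K * 2 ^ (n + 1) / m ≤ Real.exp (-1) := by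
    rw [div_le_iff₀ hm0, Real.exp_neg, inv_mul_eq_div, le_div_iff₀ he]
    refine le_trans ?_ hm2
    rw [pow_succ]
    have : K * Real.exp 1 * 2 * (2 ^ n) ≤ K * Real.exp 1 * 2 * L := by gcongr
    linarith
  have h2 : (K * 2 ^ (n + 1) / m) ^ 2 ^ (n + 1) ≤ Real.exp (-L) := by
    refine (pow_le_pow_left₀ (by positivity) h1 _).trans ?_
    rw [← Real.exp_nat_mul]
    refine Real.exp_le_exp.2 ?_
    push_cast
    linarith
  have h3 : Real.exp (-L) = ((N ^ t) ^ k)⁻¹ * (β / 2) := by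
    rw [hL, neg_add, Real.exp_add, Real.exp_neg, Real.exp_neg, Real.exp_log (by positivity),
      ← pow_mul, ← Real.exp_log (pow_pos hN0 (t * k)), Real.log_pow, inv_div]
    push_cast
    ring_nf
  calc _ ≤ 2 * (N ^ t) ^ k * (((N ^ t) ^ k)⁻¹ * (β / 2)) := by
        rw [← h3]; gcongr
    _ = β := by
        have : (N ^ t) ^ k ≠ 0 := by positivity
        field_simp

lemma t_bounds (N k : ℕ) (hN : 0 < N) (hk : 0 < k) :
    ∃ t : ℕ, 0 < t ∧ (N : ℝ) ^ k ≤ N * (t : ℝ) ^ k ∧ (N : ℝ) * (t : ℝ) ^ k ≤ (2 * N) ^ k ∧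
      (t : ℝ) ≤ 2 * N ∧ (t : ℝ) ≤ 2 * (N : ℝ) ^ (1 - (k : ℝ)⁻¹) := by
  have hN1 : (1:ℝ) ≤ N := by exact_mod_cast hN
  have hk1 : (1:ℝ) ≤ k := by exact_mod_cast hk
  have hN0 : (0:ℝ) < N := by linarith
  have hki : (k:ℝ)⁻¹ ≤ 1 := inv_le_one_of_one_le₀ hk1
  have hki0 : 0 ≤ (k:ℝ)⁻¹ := by positivity
  set x : ℝ := (N : ℝ) ^ (1 - (k : ℝ)⁻¹) with hx
  have hx1 : 1 ≤ x := Real.one_le_rpow hN1 (by linarith)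
  have hxN : x ≤ N := by
    rw [hx]
    calc _ ≤ (N:ℝ) ^ (1:ℝ) := Real.rpow_le_rpow_of_exponent_le hN1 (by linarith)
      _ = N := Real.rpow_one _
  have hxk : N * x ^ k = (N : ℝ) ^ k := by
    have h1 : x ^ k = (N:ℝ) ^ ((k:ℝ) - 1) := by
      rw [hx, ← Real.rpow_natCast, ← Real.rpow_mul hN0.le]
      congr 1
      field_simp
    rw [h1, Real.rpow_sub_one hN0.ne', Real.rpow_natCast]
    field_simp
  have h1 : x ≤ ⌈x⌉₊ := Nat.le_ceil x
  have h2 : (⌈x⌉₊ : ℝ) ≤ 2 * x := by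
    have := (Nat.ceil_lt_add_one (by linarith : 0 ≤ x)).le
    linarith
  refine ⟨⌈x⌉₊, Nat.ceil_pos.2 (by linarith), ?_, ?_, by linarith, h2⟩
  · rw [← hxk]; gcongr
  · calc (N : ℝ) * (⌈x⌉₊ : ℝ) ^ k ≤ N * (2 * x) ^ k := by gcongr
      _ = 2 ^ k * (N * x ^ k) := by rw [mul_pow]; ring
      _ = (2 * N) ^ k := by rw [hxk, mul_pow]

lemma main_m (α : ℝ) (hα : 0 < α) (k : ℕ) (hk : 0 < k) (β : ℝ) (hβ : 0 < β) (hβ1 : β < 1) :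
    ∃ C : ℝ, 1 ≤ C ∧ ∃ N0 : ℕ, 3 ≤ N0 ∧ ∀ N : ℕ, N0 ≤ N → ∀ m : ℕ,
      C * (N : ℝ) ^ (1 - (k : ℝ)⁻¹) * Real.log N ≤ m →
      (1 - β) * ({D : Finset (ZMod N) | D.card = m} : Set (Finset (ZMod N))).ncard ≤
      ({D : Finset (ZMod N) | D.card = m ∧
          ∀ A : Finset (ZMod N), α * N ≤ A.card →
            ∃ a d : ZMod N, d ∈ D ∧ d ≠ 0 ∧
              ∀ j : ℕ, j < 2 * k → a + (j : ZMod N) * d ∈ A} : Set (Finset (ZMod N))).ncard := by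
  classical
  obtain ⟨K, hK, N1, hb⟩ := iid_bound k hk α hα
  have hlb : 0 ≤ Real.log (2 / β) := by
    refine Real.log_nonneg ?_
    rw [one_le_div hβ]; linarith
  refine ⟨max 1 (4 * Real.exp 1 * K * (k + Real.log (2 / β))), le_max_left _ _, max 3 N1,
    le_max_left _ _, ?_⟩
  intro N hN m hm
  set C := max 1 (4 * Real.exp 1 * K * (k + Real.log (2 / β))) with hC
  have hN3 : 3 ≤ N := (le_max_left _ _).trans hN
  haveI : NeZero N := ⟨by omega⟩
  have hN0 : (0:ℝ) < N := by exact_mod_cast (by omega : 0 < N)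
  have hlog : 1 ≤ Real.log N := by
    rw [Real.le_log_iff_exp_le hN0]
    have h3 : (3:ℝ) ≤ N := by exact_mod_cast hN3
    have := Real.exp_one_lt_d9
    linarith
  obtain ⟨t, ht, ht1, ht2, ht3, ht4⟩ := t_bounds N k (by omega) hk
  have hx : 0 < (N : ℝ) ^ (1 - (k : ℝ)⁻¹) := Real.rpow_pos_of_pos hN0 _
  have hm0 : 0 < m := by
    have : (0:ℝ) < m := lt_of_lt_of_le (by positivity) hm
    exact_mod_cast this
  have he := Real.exp_pos 1
  have hm1 : 2 * Real.exp 1 * K * ((k + Real.log (2 / β)) * (t * Real.log N)) ≤ m := by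
    refine le_trans ?_ hm
    calc 2 * Real.exp 1 * K * ((k + Real.log (2 / β)) * (t * Real.log N))
        ≤ 2 * Real.exp 1 * K * ((k + Real.log (2 / β)) * ((2 * (N : ℝ) ^ (1 - (k : ℝ)⁻¹)) * Real.log N)) := by
          gcongr
      _ = (4 * Real.exp 1 * K * (k + Real.log (2 / β))) * (N : ℝ) ^ (1 - (k : ℝ)⁻¹) * Real.log N := by ring
      _ ≤ _ := by
          gcongr
          exact le_max_right _ _
  obtain ⟨j, hj⟩ := num_bound hβ hβ1 hK hk ht hlog hN0 hm1
  have hbb := (hb N ((le_max_right _ _).trans hN) t ht1 ht2 ht3 m j hm0).trans hj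
  have hall : ({D : Finset (ZMod N) | D.card = m} : Set (Finset (ZMod N))) =
      ((powersetCard m univ : Finset (Finset (ZMod N))) : Set (Finset (ZMod N))) := by
    ext D; simp
  rw [hall, Set.ncard_coe_finset]
  by_cases hmN : m ≤ Fintype.card (ZMod N)
  swap
  · have : (powersetCard m univ : Finset (Finset (ZMod N))) = ∅ :=
      powersetCard_eq_empty.2 (by rw [card_univ]; omega)
    rw [this]; simp
  let P : Finset (ZMod N) → Prop := fun D => ∃ A : Finset (ZMod N), α * N ≤ #A ∧
    ∀ d ∈ D, d ≠ 0 → ∀ a : ZMod N, ¬ ∀ l : ℕ, l < 2 * k → a + (l : ZMod N) * d ∈ A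
  have hP : ∀ S T, S ⊆ T → P T → P S := by
    rintro S T h ⟨A, hA, h'⟩
    exact ⟨A, hA, fun d hd => h' d (h hd)⟩
  have hun := unif P hP m hmN
  have hden : den {u : Fin m → ZMod N | P (univ.image u)} ≤ β := by
    refine le_trans (den_mono ?_) hbb
    rintro u ⟨A, hA, h'⟩
    exact ⟨A, hA, fun i hi => h' (u i) (mem_image_of_mem _ (mem_univ i)) hi⟩
  have hgood : ((filter (fun D => ¬ P D) (powersetCard m univ) : Finset (Finset (ZMod N))) :
      Set (Finset (ZMod N))) ⊆ {D : Finset (ZMod N) | D.card = m ∧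
          ∀ A : Finset (ZMod N), α * N ≤ A.card →
            ∃ a d : ZMod N, d ∈ D ∧ d ≠ 0 ∧
              ∀ j : ℕ, j < 2 * k → a + (j : ZMod N) * d ∈ A} := by
    intro D hD
    rw [mem_coe, mem_filter, mem_powersetCard] at hD
    refine ⟨hD.1.2, fun A hA => ?_⟩
    by_contra hcon
    refine hD.2 ⟨A, hA, fun d hd hd0 a ha => hcon ⟨a, d, hd, hd0, ha⟩⟩
  have hle := Set.ncard_le_ncard hgood (Set.toFinite _)
  rw [Set.ncard_coe_finset] at hle
  have hsum := card_filter_add_card_filter_not (s := (powersetCard m univ : Finset (Finset (ZMod N)))) P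
  have hle' : (#(filter (fun D => ¬ P D) (powersetCard m univ)) : ℝ) ≤ _ := Nat.cast_le.2 hle
  refine le_trans ?_ hle'
  have hsum' : (#(filter P (powersetCard m (univ : Finset (ZMod N)))) : ℝ) +
      #(filter (fun D => ¬ P D) (powersetCard m univ)) = #(powersetCard m (univ : Finset (ZMod N))) := by
    exact_mod_cast hsum
  have h9 : den {u : Fin m → ZMod N | P (univ.image u)} * #(powersetCard m (univ : Finset (ZMod N))) ≤
      β * #(powersetCard m (univ : Finset (ZMod N))) :=
    mul_le_mul_of_nonneg_right hden (Nat.cast_nonneg _)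
  linarith

end SzRD

theorem szemeredi_random_differences (α : ℝ) (hα : 0 < α) (q : ℕ) (hq : 2 ≤ q)
    (β : ℝ) (hβ : β ∈ Set.Ioo (0 : ℝ) 1) :
    ∃ C : ℝ, 0 < C ∧ ∃ N0 : ℕ, 0 < N0 ∧ ∀ N : ℕ, N0 ≤ N →
      (1 - β) * ({D : Finset (ZMod N) |
          D.card = (if q = 2 then ⌈C * Real.log N ^ 2⌉₊
            else ⌈C * (N : ℝ) ^ (1 - ((((q + 1) / 2 : ℕ) : ℝ))⁻¹) *
              Real.log N ^ C⌉₊)} : Set (Finset (ZMod N))).ncard ≤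
      ({D : Finset (ZMod N) |
          D.card = (if q = 2 then ⌈C * Real.log N ^ 2⌉₊
            else ⌈C * (N : ℝ) ^ (1 - ((((q + 1) / 2 : ℕ) : ℝ))⁻¹) *
              Real.log N ^ C⌉₊) ∧
          ∀ A : Finset (ZMod N), α * N ≤ A.card →
            ∃ a d : ZMod N, d ∈ D ∧ d ≠ 0 ∧
              ∀ j : ℕ, j < q → a + (j : ZMod N) * d ∈ A} : Set (Finset (ZMod N))).ncard := by
  obtain ⟨C, hC, N0, hN0, h⟩ := SzRD.main_m α hα ((q + 1) / 2) (by omega) β hβ.1 hβ.2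
  refine ⟨C, by linarith, N0, by omega, fun N hN => ?_⟩
  have hNp : (0:ℝ) < N := by exact_mod_cast (by omega : 0 < N)
  have hlog : 1 ≤ Real.log N := by
    rw [Real.le_log_iff_exp_le hNp]
    have h3 : (3:ℝ) ≤ N := by exact_mod_cast (by omega : 3 ≤ N)
    have := Real.exp_one_lt_d9
    linarith
  set m := (if q = 2 then ⌈C * Real.log N ^ 2⌉₊
            else ⌈C * (N : ℝ) ^ (1 - ((((q + 1) / 2 : ℕ) : ℝ))⁻¹) *
              Real.log N ^ C⌉₊) with hmdef
  have hm : C * (N : ℝ) ^ (1 - ((((q + 1) / 2 : ℕ) : ℝ))⁻¹) * Real.log N ≤ m := by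
    rw [hmdef]
    split_ifs with h2
    · subst h2
      refine le_trans ?_ (Nat.le_ceil _)
      norm_num
      have : Real.log N ≤ Real.log N ^ 2 := by nlinarith
      exact mul_le_mul_of_nonneg_left this (by linarith)
    · refine le_trans ?_ (Nat.le_ceil _)
      refine mul_le_mul_of_nonneg_left ?_ (by positivity)
      calc Real.log N = Real.log N ^ (1:ℝ) := (Real.rpow_one _).symm
        _ ≤ Real.log N ^ C := Real.rpow_le_rpow_of_exponent_le hlog hC
  haveI : NeZero N := ⟨by omega⟩
  refine (h N hN m hm).trans (Nat.cast_le.2 (Set.ncard_le_ncard ?_ (Set.toFinite _)))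
  rintro D ⟨hD, hA⟩
  refine ⟨hD, fun A hA' => ?_⟩
  obtain ⟨a, d, hd, hd0, had⟩ := hA A hA'
  exact ⟨a, d, hd, hd0, fun j hj => had j (by omega)⟩
end

section
/- For every odd prime p there exists ε(p) ∈ (0,1] such that the following holds for all positive integers n. For every set A ⊆ F_p^n with |A| ≤ C(n+p−3, p−2) − 1 (binomial coefficient), there exists a set B ⊆ F_p^n with |B| ≥ ε(p)·p^n such that every nontrivial line containing a point of A meets B in at most p−2 points. (In fact one may take |B| ≥ p^n / p^{(2p−3)/(p−1)}.) -/
open MvPolynomial in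
lemma aux_poly {p : ℕ} [Fact p.Prime] (n d : ℕ) (A : Finset (Fin n → ZMod p))
    (hA : A.card < (Finset.finsuppAntidiag (Finset.univ : Finset (Fin n)) d).card) :
    ∃ P : MvPolynomial (Fin n) (ZMod p), P ≠ 0 ∧ P.totalDegree ≤ d ∧
      ∀ a ∈ A, eval a P = 0 := by
  classical
  set T := Finset.finsuppAntidiag (Finset.univ : Finset (Fin n)) d with hT
  let L : (T → ZMod p) →ₗ[ZMod p] MvPolynomial (Fin n) (ZMod p) :=
    ∑ t : T, (MvPolynomial.monomial (t : Fin n →₀ ℕ)).comp (LinearMap.proj t)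
  have hL : ∀ c, L c = ∑ t : T, MvPolynomial.monomial (t : Fin n →₀ ℕ) (c t) := by
    intro c; simp [L]
  let E : (T → ZMod p) →ₗ[ZMod p] (A → ZMod p) :=
    LinearMap.pi fun a => (MvPolynomial.aeval (R := ZMod p) (a : Fin n → ZMod p)).toLinearMap.comp L
  have hker : LinearMap.ker E ≠ ⊥ := by
    apply LinearMap.ker_ne_bot_of_finrank_lt
    simpa using hA
  obtain ⟨c, hc, hc0⟩ := (Submodule.ne_bot_iff _).mp hker
  refine ⟨L c, ?_, ?_, ?_⟩
  · intro h0
    apply hc0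
    funext t
    have h1 : MvPolynomial.coeff (t : Fin n →₀ ℕ) (L c) = 0 := by rw [h0]; simp
    rw [hL, MvPolynomial.coeff_sum] at h1
    simp only [MvPolynomial.coeff_monomial] at h1
    rw [Finset.sum_eq_single t] at h1
    · simpa using h1
    · intro b _ hb
      rw [if_neg]
      exact fun h => hb (Subtype.ext h)
    · simp
  · rw [hL]
    apply MvPolynomial.totalDegree_finsetSum_le
    intro t _
    refine (MvPolynomial.totalDegree_monomial_le _ _).trans ?_
    have := Finset.mem_finsuppAntidiag.mp t.2
    rw [Finsupp.sum_fintype _ _ (by simp)]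
    exact this.1.le
  · intro a ha
    have h2 := congrFun (LinearMap.mem_ker.mp hc) ⟨a, ha⟩
    simpa [E, MvPolynomial.aeval_eq_eval] using h2

open MvPolynomial in
lemma aux_line {p : ℕ} [Fact p.Prime] (n d : ℕ) (P : MvPolynomial (Fin n) (ZMod p))
    (hd : P.totalDegree ≤ d) (a y : Fin n → ZMod p) (ha : eval a P = 0) (c : ZMod p)
    (hc : c ≠ 0) :
    (Finset.univ.filter fun lam : ZMod p => eval (a + lam • y) P = c).card ≤ d := by
  classical
  let f : Fin n → Polynomial (ZMod p) := fun i => Polynomial.C (a i) + Polynomial.X * Polynomial.C (y i)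
  let Q := MvPolynomial.aeval f P
  have hQ : Q.natDegree ≤ d := by
    have := MvPolynomial.aeval_natDegree_le (n := 1) P hd f (by
      intro i
      simp only [f]
      compute_degree)
    simpa using this
  have hev : ∀ l : ZMod p, Q.eval l = eval (a + l • y) P := by
    intro l
    have h := MvPolynomial.map_aeval f (Polynomial.evalRingHom l) P
    simp only [Q]
    rw [← Polynomial.coe_evalRingHom, h]
    have e1 : (Polynomial.evalRingHom l).comp (algebraMap (ZMod p) (Polynomial (ZMod p)))
        = RingHom.id (ZMod p) := Subsingleton.elim _ _
    have e2 : (fun i => (Polynomial.evalRingHom l) (f i)) = a + l • y := by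
      funext i
      simp [f]
      ring
    rw [e1, e2]
    rfl
  have hne : Q - Polynomial.C c ≠ 0 := by
    intro h
    have h1 := congrArg (Polynomial.eval 0) h
    simp only [Polynomial.eval_sub, hev, Polynomial.eval_C, zero_smul, add_zero, ha,
      Polynomial.eval_zero, zero_sub, neg_eq_zero] at h1
    exact hc h1
  calc _ ≤ (Q - Polynomial.C c).roots.toFinset.card := by
        apply Finset.card_le_card
        intro l hl
        simp only [Finset.mem_filter, Finset.mem_univ, true_and] at hl
        rw [Multiset.mem_toFinset, Polynomial.mem_roots hne]
        simp [Polynomial.IsRoot, hev, hl]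
    _ ≤ (Q - Polynomial.C c).roots.card := Multiset.toFinset_card_le _
    _ ≤ (Q - Polynomial.C c).natDegree := Polynomial.card_roots' _
    _ ≤ d := by rw [Polynomial.natDegree_sub_C]; exact hQ

open MvPolynomial in
lemma aux_size {p : ℕ} [Fact p.Prime] (hp : 3 ≤ p) (n : ℕ) (hn : 0 < n)
    (P : MvPolynomial (Fin n) (ZMod p))
    (hd : P.totalDegree ≤ p - 2) (h0 : P ≠ 0) :
    ∃ c : ZMod p, c ≠ 0 ∧ 2 * p ^ (n - 1) ≤
      (p - 1) * (Finset.univ.filter fun x : Fin n → ZMod p => eval x P = c).card := by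
  classical
  have hz : (Finset.univ.filter fun x : Fin n → ZMod p => eval x P = 0).card ≤
      (p - 2) * p ^ (n - 1) := by
    have h := MvPolynomial.schwartz_zippel_totalDegree h0 (Finset.univ)
    simp only [Fintype.piFinset_univ, Finset.card_univ, ZMod.card] at h
    have hpp : (0 : ℚ≥0) < p := by exact_mod_cast (by omega : 0 < p)
    rw [div_le_div_iff₀ (by positivity) hpp] at h
    have h' : (Finset.univ.filter fun x : Fin n → ZMod p => eval x P = 0).card * p
      ≤ P.totalDegree * p ^ n := by exact_mod_cast h
    have h2 : P.totalDegree * p ^ n ≤ (p - 2) * p ^ (n - 1) * p := by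
      rw [mul_assoc, ← pow_succ, Nat.sub_add_cancel hn]
      exact Nat.mul_le_mul_right _ hd
    exact Nat.le_of_mul_le_mul_right (h'.trans h2) (by omega)
  have hsum : p ^ n = ∑ c : ZMod p,
      (Finset.univ.filter fun x : Fin n → ZMod p => eval x P = c).card := by
    have := Finset.card_eq_sum_card_fiberwise (f := fun x : Fin n → ZMod p => eval x P)
      (s := Finset.univ) (t := Finset.univ) (by intro x _; simp)
    simpa using this
  by_contra! hcon
  rw [← Finset.add_sum_erase _ _ (Finset.mem_univ (0 : ZMod p))] at hsum
  have hcard : (Finset.univ.erase (0 : ZMod p)).card = p - 1 := by simp [ZMod.card]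
  have hlt : ∑ c ∈ Finset.univ.erase (0 : ZMod p),
      (p - 1) * (Finset.univ.filter fun x : Fin n → ZMod p => eval x P = c).card
      < ∑ c ∈ Finset.univ.erase (0 : ZMod p), 2 * p ^ (n - 1) := by
    apply Finset.sum_lt_sum_of_nonempty
    · rw [← Finset.card_pos, hcard]; omega
    · intro c hc
      exact hcon c (Finset.ne_of_mem_erase hc)
  rw [← Finset.mul_sum, Finset.sum_const, hcard, smul_eq_mul] at hlt
  have hlt' := Nat.lt_of_mul_lt_mul_left hlt
  have h3 : p ^ n = (p - 2) * p ^ (n - 1) + 2 * p ^ (n - 1) := by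
    rw [← add_mul, Nat.sub_add_cancel (by omega), ← pow_succ', Nat.sub_add_cancel hn]
  omega

lemma aux_num {p : ℕ} (hp : 3 ≤ p) (n b : ℕ) (hn : 0 < n)
    (h : 2 * p ^ (n - 1) ≤ (p - 1) * b) :
    (p : ℝ) ^ n / (p : ℝ) ^ ((2 * (p : ℝ) - 3) / ((p : ℝ) - 1)) ≤ b := by
  obtain ⟨m, rfl⟩ : ∃ m, n = m + 1 := ⟨n - 1, by omega⟩
  have hp3 : (3 : ℝ) ≤ p := by exact_mod_cast hp
  have hp0 : (0 : ℝ) < p := by linarith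
  have hroot : (p : ℝ) ^ (1 / ((p : ℝ) - 1)) ≤ 2 := by
    have h1 : (p : ℝ) ≤ 2 ^ ((p : ℝ) - 1) := by
      have : p ≤ 2 ^ (p - 1) := by
        have := Nat.lt_two_pow_self (n := p - 1)
        omega
      have h2 : (p : ℝ) ≤ 2 ^ (p - 1) := by exact_mod_cast this
      rw [← Real.rpow_natCast, Nat.cast_sub (by omega)] at h2
      simpa using h2
    calc (p : ℝ) ^ (1 / ((p : ℝ) - 1)) ≤ (2 ^ ((p : ℝ) - 1)) ^ (1 / ((p : ℝ) - 1)) := by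
          apply Real.rpow_le_rpow hp0.le h1
          apply div_nonneg <;> linarith
      _ = 2 := by
          rw [← Real.rpow_mul (by norm_num), mul_one_div_cancel (by linarith), Real.rpow_one]
  have hexp : (p : ℝ) ^ ((2 * (p : ℝ) - 3) / ((p : ℝ) - 1)) =
      p ^ 2 / (p : ℝ) ^ (1 / ((p : ℝ) - 1)) := by
    rw [← Real.rpow_natCast, ← Real.rpow_sub hp0]
    congr 1
    have : (p : ℝ) - 1 ≠ 0 := by linarith
    field_simp
    push_cast
    ring
  have hR : 2 * (p : ℝ) ^ m ≤ (p - 1) * b := by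
    have : ((2 * p ^ m : ℕ) : ℝ) ≤ (((p - 1) * b : ℕ) : ℝ) := by exact_mod_cast h
    push_cast [Nat.cast_sub (show 1 ≤ p by omega)] at this
    exact this
  have hb : (0 : ℝ) ≤ b := Nat.cast_nonneg b
  rw [hexp, div_div_eq_mul_div, div_le_iff₀ (by positivity), pow_succ]
  calc (p : ℝ) ^ m * p * (p : ℝ) ^ (1 / ((p : ℝ) - 1)) ≤ (p : ℝ) ^ m * p * 2 := by gcongr
    _ = p * (2 * (p : ℝ) ^ m) := by ring
    _ ≤ p * ((p - 1) * b) := by gcongr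
    _ ≤ b * p ^ 2 := by nlinarith [mul_nonneg hp0.le hb]

/-- For every odd prime `p` there is `ε(p) ∈ (0,1]` such that for every set `A ⊆ F_p^n` of
size at most `C(n+p−3, p−2) − 1` there is a set `B` of size at least `ε(p)·p^n`
(indeed of size at least `p^n / p^{(2p−3)/(p−1)}`) such that every nontrivial line through a
point of `A` meets `B` in at most `p−2` points. -/
theorem avoiding_set_exists :
    ∀ p : ℕ, ∀ _ : Fact p.Prime, p ≠ 2 →
    ∃ ε : ℝ, ε ∈ Set.Ioc (0 : ℝ) 1 ∧
    ∀ n : ℕ, 0 < n → ∀ A : Finset (Fin n → ZMod p),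
      A.card ≤ Nat.choose (n + p - 3) (p - 2) - 1 →
      ∃ B : Finset (Fin n → ZMod p),
        ε * (p : ℝ) ^ n ≤ B.card ∧
        (p : ℝ) ^ n / (p : ℝ) ^ ((2 * (p : ℝ) - 3) / ((p : ℝ) - 1)) ≤ B.card ∧
        ∀ a ∈ A, ∀ y : Fin n → ZMod p, y ≠ 0 →
          (Finset.univ.filter fun lam : ZMod p => a + lam • y ∈ B).card ≤ p - 2 := by
  intro p hpF hp2
  have hp : 3 ≤ p := by
    have := hpF.out.two_le
    omega
  have hp3 : (3 : ℝ) ≤ p := by exact_mod_cast hp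
  have hp0 : (0 : ℝ) < p := by linarith
  refine ⟨1 / (p : ℝ) ^ ((2 * (p : ℝ) - 3) / ((p : ℝ) - 1)), ⟨by positivity, ?_⟩, ?_⟩
  · rw [div_le_one (by positivity)]
    apply Real.one_le_rpow (by linarith)
    apply div_nonneg <;> linarith
  intro n hn A hA
  have hcard : (Finset.finsuppAntidiag (Finset.univ : Finset (Fin n)) (p - 2)).card
      = Nat.choose (n + p - 3) (p - 2) := by
    rw [Finset.card_finsuppAntidiag_nat_eq_choose]
    simp only [Finset.card_univ, Fintype.card_fin]
    congr 1
    omega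
  have hpos : 0 < Nat.choose (n + p - 3) (p - 2) := Nat.choose_pos (by omega)
  obtain ⟨P, h0, hd, hv⟩ := aux_poly n (p - 2) A (by rw [hcard]; omega)
  obtain ⟨c, hc, hsize⟩ := aux_size hp n hn P hd h0
  have hnum := aux_num hp n _ hn hsize
  refine ⟨Finset.univ.filter fun x : Fin n → ZMod p => MvPolynomial.eval x P = c, ?_, hnum, ?_⟩
  · rw [one_div_mul_eq_div]
    exact hnum
  · intro a ha y _
    simpa using aux_line n (p - 2) P hd a y (hv a ha) c hc
end
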